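/- arXiv:2302.10118 — 4 statements merged into one kernel-verified Lean document; each statement's English description precedes it below -/
import Mathlib

section
/- For every 1 ≤ k ≤ n, the set of lattice points of the fundamental symplectic FFLV polytope satisfies S(ω_k) = { s_{[k],J} : J ⊆ {1,…,2n}, |J| = k }. -/
/-- Index of a positive root of `sp_{2n}`: `(i, j, false)` encodes `α_{i,j}` with
`1 ≤ i ≤ j ≤ n`, and `(i, j, true)` encodes `α_{i,j̄}` with `1 ≤ i ≤ j ≤ n-1`. -/
def IsSpRootIdx (n : ℕ) (t : ℕ × ℕ × Bool) : Prop :=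
  1 ≤ t.1 ∧ t.1 ≤ t.2.1 ∧ t.2.1 ≤ n ∧ (t.2.2 = true → t.2.1 + 1 ≤ n)

instance (n : ℕ) (t : ℕ × ℕ × Bool) : Decidable (IsSpRootIdx n t) :=
  inferInstanceAs (Decidable (1 ≤ t.1 ∧ t.1 ≤ t.2.1 ∧ t.2.1 ≤ n ∧ (t.2.2 = true → t.2.1 + 1 ≤ n)))

/-- The set `Φ⁺` of positive roots of `sp_{2n}`. -/
def SpRoot (n : ℕ) : Type := {t : ℕ × ℕ × Bool // IsSpRootIdx n t}

/-- Normalised root index, implementing the convention `α_{i,n̄} := α_{i,n}`. -/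
def rIdx (n i j : ℕ) (b : Bool) : ℕ × ℕ × Bool :=
  if b = true ∧ j = n then (i, j, false) else (i, j, b)

/-- Successor in the ordered index set `1 < 2 < ⋯ < n < (n-1)̄ < ⋯ < 1̄` of second
coordinates of roots (second component is the "barred" flag). -/
def qSucc (n : ℕ) : ℕ × Bool → ℕ × Bool
  | (j, true) => (j - 1, true)
  | (j, false) => if j = n then (n - 1, true) else (j + 1, false)

/-- The Dyck path recursion: from `α_{p,q}` one moves to `α_{p,q⁺}` or `α_{p+1,q}`. -/
def SpDyckStep (n : ℕ) (s t : ℕ × ℕ × Bool) : Prop :=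
  t = (s.1, (qSucc n (s.2.1, s.2.2)).1, (qSucc n (s.2.1, s.2.2)).2) ∨
  t = (s.1 + 1, s.2.1, s.2.2)

/-- Index of a simple root `α_i = α_{i,i}`. -/
def IsSimpleIdx (n : ℕ) (t : ℕ × ℕ × Bool) : Prop :=
  ∃ i : ℕ, 1 ≤ i ∧ i ≤ n ∧ t = (i, i, false)

/-- Admissible last element of a symplectic Dyck path: a simple root or `α_{j,j̄}`, `j ≤ n-1`. -/
def IsDyckEndIdx (n : ℕ) (t : ℕ × ℕ × Bool) : Prop :=
  IsSimpleIdx n t ∨ ∃ j : ℕ, 1 ≤ j ∧ j + 1 ≤ n ∧ t = (j, j, true)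

/-- A symplectic Dyck path, encoded as a nonempty list of positive roots. -/
def IsDyckPath (n : ℕ) (L : List (SpRoot n)) : Prop :=
  L ≠ [] ∧
  (∀ h ∈ L.head?, IsSimpleIdx n h.val) ∧
  (∀ l ∈ L.getLast?, IsDyckEndIdx n l.val) ∧
  L.Chain' (fun a b => SpDyckStep n a.val b.val)

/-- The symplectic FFLV polytope `FFLV(λ) ⊆ ℝ^{Φ⁺}` for `λ = m₁ω₁ + ⋯ + m_nω_n`. -/
def FFLVpoly (n : ℕ) (m : ℕ → ℕ) : Set (SpRoot n → ℝ) :=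
  {x | (∀ β, 0 ≤ x β) ∧
    ∀ L : List (SpRoot n), IsDyckPath n L →
      ∀ hd lst : SpRoot n, L.head? = some hd → L.getLast? = some lst →
        ∀ i : ℕ, hd.val = (i, i, false) →
          (∀ j : ℕ, lst.val = (j, j, false) →
            (L.map x).sum ≤ ∑ t ∈ Finset.Icc i j, (m t : ℝ)) ∧
          (∀ j : ℕ, lst.val = (j, j, true) →
            (L.map x).sum ≤ ∑ t ∈ Finset.Icc i n, (m t : ℝ))}

/-- `S(λ)`: the set of lattice points of `FFLV(λ)`. -/
def Slat (n : ℕ) (m : ℕ → ℕ) : Set (SpRoot n → ℕ) :=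
  {s | (fun β => (s β : ℝ)) ∈ FFLVpoly n m}

/-- The positive root `r(x,y)` attached to `1 ≤ x < y ≤ 2n` (identifying
`1 < ⋯ < n < n̄ < ⋯ < 1̄` with `{1, …, 2n}` via `ī = 2n+1-i`):
`r(x,y) = α_{x,y-1}` if `y ≤ n`; `r(x,y) = α_{x,(2n+1-y)̄}` if `x ≤ n < y ≤ 2n+1-x`;
`r(x,y) = α_{2n+1-y,x̄}` if `x ≤ n` and `y > 2n+1-x`; `r(x,y) = α_{2n+1-y,2n-x}` if `n < x`. -/
def rIdxXY (n x y : ℕ) : ℕ × ℕ × Bool :=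
  if y ≤ n then (x, y - 1, false)
  else if x ≤ n then
    if y ≤ 2*n + 1 - x then rIdx n x (2*n + 1 - y) true
    else rIdx n (2*n + 1 - y) x true
  else (2*n + 1 - y, 2*n - x, false)

/-- The multi-exponent `s_{[k],J} ∈ ℕ^{Φ⁺}`: with `{p₁ < ⋯ < p_s} = {1,…,k} ∖ J` and
`{q₁ < ⋯ < q_s} = J ∖ {1,…,k}`, it is the sum of the indicator vectors of the roots
`r(p_r, q_{s+1-r})`. -/
noncomputable def sKJ (n k : ℕ) (J : Finset ℕ) : SpRoot n → ℕ :=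
  fun β =>
    (List.zip ((Finset.Icc 1 k \ J).sort (· ≤ ·))
              (((J \ Finset.Icc 1 k).sort (· ≤ ·)).reverse)).countP
      (fun pq => decide (rIdxXY n pq.1 pq.2 = β.val))

/-- First coordinate of the cell of a root. -/
def cx {n : ℕ} (β : SpRoot n) : ℕ := β.val.1

/-- Second coordinate of the cell of a root. -/
def cy {n : ℕ} (β : SpRoot n) : ℕ :=
  if β.val.2.2 = true then 2 * n + 1 - β.val.2.1 else β.val.2.1 + 1

lemma cell_bounds {n : ℕ} (β : SpRoot n) : 1 ≤ cx β ∧ cx β < cy β ∧ cx β + cy β ≤ 2 * n + 1 := by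
  obtain ⟨⟨i, j, b⟩, h1, h2, h3, h4⟩ := β
  simp only [cx, cy] at *
  cases b <;> simp at * <;> omega

lemma cell_inj {n : ℕ} {a b : SpRoot n} (hx : cx a = cx b) (hy : cy a = cy b) : a = b := by
  obtain ⟨⟨i, j, t⟩, h1, h2, h3, h4⟩ := a
  obtain ⟨⟨i', j', b'⟩, h1', h2', h3', h4'⟩ := b
  apply Subtype.ext
  simp only [cx, cy] at *
  cases t <;> cases b' <;> simp at * <;> omega

lemma exists_cell {n x y : ℕ} (h1 : 1 ≤ x) (h2 : x < y) (h3 : x + y ≤ 2 * n + 1) :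
    ∃ β : SpRoot n, cx β = x ∧ cy β = y := by
  by_cases h : y ≤ n + 1
  · refine ⟨⟨(x, y - 1, false), ?_⟩, ?_, ?_⟩
    · simp only [IsSpRootIdx]; simp; omega
    · simp [cx]
    · simp [cy]; omega
  · refine ⟨⟨(x, 2 * n + 1 - y, true), ?_⟩, ?_, ?_⟩
    · simp only [IsSpRootIdx]; simp; omega
    · simp [cx]
    · simp [cy]; omega

lemma step_iff {n : ℕ} (a b : SpRoot n) : SpDyckStep n a.val b.val ↔
    (cx b = cx a ∧ cy b = cy a + 1) ∨ (cx b = cx a + 1 ∧ cy b = cy a) := by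
  obtain ⟨⟨i, j, t⟩, h1, h2, h3, h4⟩ := a
  obtain ⟨⟨i', j', b'⟩, h1', h2', h3', h4'⟩ := b
  simp only [cx, cy, SpDyckStep] at *
  have hjn : j = n ∨ j + 1 ≤ n := by simp only at h3; omega
  cases t <;> cases b' <;> by_cases hj : j = n <;> simp [qSucc, hj] at * <;> omega

/-- Componentwise order of cells. -/
def cle {n : ℕ} (a b : SpRoot n) : Prop := cx a ≤ cx b ∧ cy a ≤ cy b

/-- There is a chain of steps from `a` to `e` with sum at least `v`. -/
def Reach {n : ℕ} (x : SpRoot n → ℕ) (a : SpRoot n) (v : ℕ) (e : SpRoot n) : Prop :=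
  ∃ L : List (SpRoot n), L.head? = some a ∧ L.getLast? = some e ∧
    L.IsChain (fun a b => SpDyckStep n a.val b.val) ∧ v ≤ (L.map x).sum

lemma reach_refl {n : ℕ} (x : SpRoot n → ℕ) (e : SpRoot n) : Reach x e (x e) e :=
  ⟨[e], by simp⟩

lemma reach_cons {n : ℕ} {x : SpRoot n → ℕ} {a b e : SpRoot n} {v : ℕ}
    (h : SpDyckStep n a.val b.val) (hb : Reach x b v e) : Reach x a (x a + v) e := by
  obtain ⟨L, h1, h2, h3, h4⟩ := hb
  cases L with
  | nil => simp at h1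
  | cons c L =>
    simp at h1
    subst h1
    refine ⟨a :: c :: L, by simp, by simpa using h2, ?_, ?_⟩
    · exact List.isChain_cons_cons.2 ⟨h, h3⟩
    · simpa using h4

lemma reach_aux {n : ℕ} {x : SpRoot n → ℕ} {b e : SpRoot n} {v : ℕ} (hb : Reach x b v e) :
    ∀ (m : ℕ) (a : SpRoot n), cle a b → cx a + cy a + m = cx b + cy b →
      Reach x a v e ∧ (a ≠ b → Reach x a (x a + v) e) := by
  intro m
  induction m with
  | zero =>
    intro a hab hm
    obtain ⟨h1, h2⟩ := hab
    have : a = b := cell_inj (by omega) (by omega)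
    subst this
    exact ⟨hb, fun h => absurd rfl h⟩
  | succ m ih =>
    intro a hab hm
    obtain ⟨h1, h2⟩ := hab
    have Ba := cell_bounds a
    have Bb := cell_bounds b
    have : ∃ c : SpRoot n, SpDyckStep n a.val c.val ∧ cle c b ∧ cx c + cy c + m = cx b + cy b := by
      by_cases h : cy a < cy b
      · obtain ⟨c, hc1, hc2⟩ := exists_cell (n := n) (x := cx a) (y := cy a + 1) (by omega) (by omega)
          (by omega)
        exact ⟨c, (step_iff a c).2 (by omega), ⟨by omega, by omega⟩, by omega⟩
      · obtain ⟨c, hc1, hc2⟩ := exists_cell (n := n) (x := cx a + 1) (y := cy a) (by omega) (by omega)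
          (by omega)
        exact ⟨c, (step_iff a c).2 (by omega), ⟨by omega, by omega⟩, by omega⟩
    obtain ⟨c, hc1, hc2, hc3⟩ := this
    have := reach_cons hc1 (ih c hc2 hc3).1
    refine ⟨?_, fun _ => this⟩
    obtain ⟨L, p1, p2, p3, p4⟩ := this
    exact ⟨L, p1, p2, p3, by omega⟩

lemma reach_le {n : ℕ} {x : SpRoot n → ℕ} {a b e : SpRoot n} {v : ℕ} (hab : cle a b)
    (hb : Reach x b v e) : Reach x a v e ∧ (a ≠ b → Reach x a (x a + v) e) :=
  reach_aux hb (cx b + cy b - (cx a + cy a)) a hab (by obtain ⟨h1, h2⟩ := hab; omega)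

lemma chain_bounds {n : ℕ} : ∀ (L : List (SpRoot n)) (a e : SpRoot n), L.head? = some a →
    L.getLast? = some e → L.IsChain (fun a b => SpDyckStep n a.val b.val) →
    (∀ b ∈ L, cle a b ∧ cle b e) ∧
    L.Pairwise (fun a b => cle a b ∧ a ≠ b) := by
  intro L
  induction L with
  | nil => intro a e h; simp at h
  | cons c L ih =>
    intro a e h1 h2 h3
    simp at h1
    subst h1
    cases L with
    | nil =>
      simp at h2
      subst h2
      simp [cle]
    | cons d L =>
      obtain ⟨hs, h3⟩ := List.isChain_cons_cons.1 h3
      obtain ⟨i1, i2⟩ := ih d e (by simp) (by simpa using h2) h3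
      rw [step_iff] at hs
      have key : ∀ b ∈ d :: L, cle c b ∧ c ≠ b := by
        intro b hb
        obtain ⟨⟨q1, q2⟩, -⟩ := i1 b hb
        refine ⟨⟨by omega, by omega⟩, ?_⟩
        rintro rfl
        omega
      refine ⟨?_, List.pairwise_cons.2 ⟨key, i2⟩⟩
      intro b hb
      rcases List.mem_cons.1 hb with rfl | hb
      · refine ⟨⟨le_rfl, le_rfl⟩, ?_⟩
        obtain ⟨⟨q1, q2⟩, q3, q4⟩ := i1 d (by simp)
        exact ⟨by omega, by omega⟩
      · exact ⟨(key b hb).1, (i1 b hb).2⟩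

lemma sum_le_one {n : ℕ} (s : SpRoot n → ℕ) (h1 : ∀ β, s β ≤ 1)
    (h2 : ∀ a b, s a ≠ 0 → s b ≠ 0 → cle a b → a = b) (L : List (SpRoot n))
    (hL : L.Pairwise (fun a b => cle a b ∧ a ≠ b)) : (L.map s).sum ≤ 1 := by
  induction L with
  | nil => simp
  | cons c L ih =>
    obtain ⟨q1, q2⟩ := List.pairwise_cons.1 hL
    by_cases hc : s c = 0
    · simpa [hc] using ih q2
    · have : (L.map s).sum = 0 := by
        apply List.sum_eq_zero
        intro v hv
        obtain ⟨b, hb, rfl⟩ := List.mem_map.1 hv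
        by_contra hb0
        exact (q1 b hb).2 (h2 c b hc hb0 (q1 b hb).1)
      have := h1 c
      simp
      omega

lemma bound_sum (k i j : ℕ) : ∑ t ∈ Finset.Icc i j, (((if t = k then 1 else 0 : ℕ)) : ℝ) =
    ((if i ≤ k ∧ k ≤ j then 1 else 0 : ℕ) : ℝ) := by
  rw [← Nat.cast_sum, Finset.sum_ite_eq']
  simp

/-- Combinatorial description of the lattice points. -/
def Good (n k : ℕ) (s : SpRoot n → ℕ) : Prop :=
  (∀ β, s β ≤ 1) ∧ (∀ β, s β ≠ 0 → cx β ≤ k ∧ k < cy β) ∧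
    ∀ a b, s a ≠ 0 → s b ≠ 0 → cle a b → a = b

lemma slat_path {n k : ℕ} (hkn : k ≤ n) {s : SpRoot n → ℕ}
    (hs : s ∈ Slat n (fun t => if t = k then 1 else 0)) {b : SpRoot n} {a : SpRoot n} {v : ℕ}
    (h : Reach s a v b) : v ≤ if cx a ≤ k ∧ k < cy b then 1 else 0 := by
  have Ba := cell_bounds a
  have Bb := cell_bounds b
  -- the starting simple root and the end of the column
  obtain ⟨a0, ha1, ha2⟩ := exists_cell (n := n) (x := cx a) (y := cx a + 1) (by omega) (by omega)
    (by omega)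
  obtain ⟨e, he1, he2⟩ := exists_cell (n := n) (x := min (cy b - 1) (2 * n + 1 - cy b)) (y := cy b)
    (by omega) (by omega) (by omega)
  have hR : Reach s a0 v e := by
    obtain ⟨L, p1, p2, p3, p4⟩ := (reach_le (x := s) (a := a0) (b := a) ⟨by omega, by omega⟩ h).1
    obtain ⟨M, q1, q2, q3, q4⟩ := (reach_le (x := s) (a := b) (b := e) ⟨by omega, by omega⟩
      (reach_refl s e)).1
    cases M with
    | nil => simp at q1
    | cons c M =>
      simp at q1
      subst q1
      refine ⟨L ++ M, ?_, ?_, ?_, ?_⟩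
      · simp [p1]
      · cases M with
        | nil => simp at q2; subst q2; simpa using p2
        | cons d M => simp at q2 ⊢; simp [q2]
      · refine List.isChain_append.2 ⟨p3, ?_, ?_⟩
        · exact q3.tail
        · intro u hu w hw
          rw [p2] at hu
          cases M with
          | nil => simp at hw
          | cons d M =>
            simp at hu hw
            subst hu hw
            exact (List.isChain_cons_cons.1 q3).1
      · simp; omega
  obtain ⟨L, p1, p2, p3, p4⟩ := hR
  have hv0 : a0.val = (cx a, cx a, false) := by
    obtain ⟨a0', ha0'⟩ : ∃ a0' : SpRoot n, a0'.val = (cx a, cx a, false) :=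
      ⟨⟨(cx a, cx a, false), by simp [IsSpRootIdx]; omega⟩, rfl⟩
    rw [← ha0']
    congr 1
    apply cell_inj
    · rw [ha1]; simp [cx, ha0']
    · rw [ha2]; simp [cy, ha0']
  have hsimple : IsSimpleIdx n a0.val := ⟨cx a, by omega, by omega, hv0⟩
  have hsum : ((L.map (fun β => (s β : ℝ))).sum) = (((L.map s).sum : ℕ) : ℝ) := by
    rw [Nat.cast_list_sum]; simp [Function.comp_def]
  by_cases hcase : cy b ≤ n + 1
  · have hve : e.val = (cy b - 1, cy b - 1, false) := by
      obtain ⟨e', he'⟩ : ∃ e' : SpRoot n, e'.val = (cy b - 1, cy b - 1, false) :=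
        ⟨⟨(cy b - 1, cy b - 1, false), by simp [IsSpRootIdx]; omega⟩, rfl⟩
      rw [← he']
      congr 1
      apply cell_inj
      · rw [he1]; simp only [cx, he']; omega
      · rw [he2]; simp [cy, he']; simp only [cy] at *; omega
    have := ((hs.2 L ⟨by rintro rfl; simp at p1, by rw [p1]; simpa using hsimple, by
      rw [p2]; simp; exact Or.inl ⟨_, by omega, by omega, hve⟩, p3⟩ a0 e p1 p2 _ hv0).1 _ hve)
    rw [hsum, bound_sum, Nat.cast_le] at this
    refine p4.trans (this.trans ?_)
    split_ifs <;> omega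
  · have hve : e.val = (2 * n + 1 - cy b, 2 * n + 1 - cy b, true) := by
      obtain ⟨e', he'⟩ : ∃ e' : SpRoot n, e'.val = (2 * n + 1 - cy b, 2 * n + 1 - cy b, true) :=
        ⟨⟨(2 * n + 1 - cy b, 2 * n + 1 - cy b, true), by simp [IsSpRootIdx]; omega⟩, rfl⟩
      rw [← he']
      congr 1
      apply cell_inj
      · rw [he1]; simp only [cx, he']; omega
      · rw [he2]
        have : cy e' = 2 * n + 1 - (2 * n + 1 - cy b) := by simp [cy, he']
        omega
    have := ((hs.2 L ⟨by rintro rfl; simp at p1, by rw [p1]; simpa using hsimple, by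
      rw [p2]; simp; exact Or.inr ⟨_, by omega, by omega, hve⟩, p3⟩ a0 e p1 p2 _ hv0).2 _ hve)
    rw [hsum, bound_sum, Nat.cast_le] at this
    refine p4.trans (this.trans ?_)
    split_ifs <;> omega

lemma good_of_slat {n k : ℕ} (hkn : k ≤ n) {s : SpRoot n → ℕ}
    (hs : s ∈ Slat n (fun t => if t = k then 1 else 0)) : Good n k s := by
  refine ⟨fun β => ?_, fun β hβ => ?_, fun a b ha hb hab => ?_⟩
  · have := slat_path hkn hs (reach_refl s β)
    split_ifs at this <;> omega
  · have := slat_path hkn hs (reach_refl s β)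
    split_ifs at this with h
    · exact h
    · omega
  · by_contra hne
    have := slat_path hkn hs ((reach_le hab (reach_refl s b)).2 hne)
    split_ifs at this <;> omega

lemma slat_of_good {n k : ℕ} (hkn : k ≤ n) {s : SpRoot n → ℕ} (hs : Good n k s) :
    s ∈ Slat n (fun t => if t = k then 1 else 0) := by
  obtain ⟨g1, g2, g3⟩ := hs
  refine ⟨fun β => Nat.cast_nonneg _, ?_⟩
  intro L hL a e ha he i hi
  obtain ⟨-, -, -, hc⟩ := hL
  obtain ⟨b1, b2⟩ := chain_bounds L a e ha he hc
  have hone := sum_le_one s g1 g3 L b2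
  have hzero : ¬ (cx a ≤ k ∧ k < cy e) → (L.map s).sum = 0 := by
    intro hn
    apply List.sum_eq_zero
    intro v hv
    obtain ⟨b, hb, rfl⟩ := List.mem_map.1 hv
    by_contra hb0
    have h1 := g2 b hb0
    obtain ⟨⟨q1, q2⟩, q3, q4⟩ := b1 b hb
    omega
  have hsum : ((L.map (fun β => (s β : ℝ))).sum) = (((L.map s).sum : ℕ) : ℝ) := by
    rw [Nat.cast_list_sum]; simp [Function.comp_def]
  have hax : cx a = i := by simp [cx, hi]
  constructor
  · intro j hj
    have hey : cy e = j + 1 := by simp [cy, hj]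
    rw [hsum, bound_sum, Nat.cast_le]
    split_ifs with h
    · exact hone
    · exact (hzero (by omega)).le
  · intro j hj
    rw [hsum, bound_sum, Nat.cast_le]
    split_ifs with h
    · exact hone
    · exact (hzero (by omega)).le

lemma rIdxXY_eq_iff {n k p q : ℕ} (hkn : k ≤ n) (hp : 1 ≤ p) (hpk : p ≤ k) (hq : k < q)
    (hq2 : q ≤ 2 * n) (β : SpRoot n) : rIdxXY n p q = β.val ↔
      (p + q ≤ 2 * n + 1 ∧ cx β = p ∧ cy β = q) ∨
      (2 * n + 1 < p + q ∧ cx β + q = 2 * n + 1 ∧ cy β + p = 2 * n + 1) := by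
  obtain ⟨⟨i, j, b⟩, h1, h2, h3, h4⟩ := β
  simp only [cx, cy, rIdxXY, rIdx] at *
  cases b <;> split_ifs <;> simp at * <;> omega

/-- The list of pairs in the definition of `sKJ`. -/
noncomputable def zlist (k : ℕ) (J : Finset ℕ) : List (ℕ × ℕ) :=
  List.zip ((Finset.Icc 1 k \ J).sort (· ≤ ·)) (((J \ Finset.Icc 1 k).sort (· ≤ ·)).reverse)

lemma zlist_pairwise (k : ℕ) (J : Finset ℕ) :
    (zlist k J).Pairwise (fun a b => a.1 < b.1 ∧ b.2 < a.2) := by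
  have h1 := (Finset.sortedLT_sort (Finset.Icc 1 k \ J)).pairwise
  have h2 := List.pairwise_reverse.2 (Finset.sortedLT_sort (J \ Finset.Icc 1 k)).pairwise
  rw [List.pairwise_iff_getElem] at h1 h2 ⊢
  intro i j hi hj hij
  simp only [zlist, List.length_zip, lt_min_iff] at hi hj
  simp only [zlist, List.getElem_zip]
  exact ⟨h1 i j hi.1 hj.1 hij, h2 i j hi.2 hj.2 hij⟩

lemma zlist_mem {n k : ℕ} {J : Finset ℕ} (hJ : J ⊆ Finset.Icc 1 (2 * n)) {c : ℕ × ℕ}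
    (hc : c ∈ zlist k J) : 1 ≤ c.1 ∧ c.1 ≤ k ∧ k < c.2 ∧ c.2 ≤ 2 * n := by
  obtain ⟨x, y⟩ := c
  have := List.of_mem_zip hc
  simp only [Finset.mem_sort, List.mem_reverse, Finset.mem_sdiff, Finset.mem_Icc] at this
  obtain ⟨⟨a1, a2⟩, a3, a4⟩ := this
  have := Finset.mem_Icc.1 (hJ a3)
  simp only
  omega

lemma countP_le_one {α : Type*} (p : α → Bool) (L : List α)
    (h : L.Pairwise (fun a b => ¬ (p a = true ∧ p b = true))) : L.countP p ≤ 1 := by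
  induction L with
  | nil => simp
  | cons c L ih =>
    obtain ⟨q1, q2⟩ := List.pairwise_cons.1 h
    by_cases hc : p c = true
    · have : L.countP p = 0 := by
        rw [List.countP_eq_zero]
        intro a ha hpa
        exact q1 a ha ⟨hc, hpa⟩
      rw [List.countP_cons, this]
      split_ifs <;> omega
    · simpa [List.countP_cons, hc] using ih q2

lemma sKJ_ne_zero {n k : ℕ} {J : Finset ℕ} (β : SpRoot n) :
    sKJ n k J β ≠ 0 ↔ ∃ c ∈ zlist k J, rIdxXY n c.1 c.2 = β.val := by
  change (zlist k J).countP _ ≠ 0 ↔ _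
  rw [← Nat.pos_iff_ne_zero, List.countP_pos_iff]
  simp

lemma good_sKJ {n k : ℕ} (hkn : k ≤ n) {J : Finset ℕ} (hJ : J ⊆ Finset.Icc 1 (2 * n)) :
    Good n k (sKJ n k J) := by
  refine ⟨fun β => ?_, fun β hβ => ?_, fun a b ha hb hab => ?_⟩
  · apply countP_le_one
    refine List.Pairwise.imp_of_mem ?_ (zlist_pairwise k J)
    intro c d hc hd hcd
    obtain ⟨c1, c2, c3, c4⟩ := zlist_mem hJ hc
    obtain ⟨d1, d2, d3, d4⟩ := zlist_mem hJ hd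
    simp only [decide_eq_true_eq]
    rw [rIdxXY_eq_iff hkn c1 c2 c3 c4, rIdxXY_eq_iff hkn d1 d2 d3 d4]
    omega
  · obtain ⟨c, hc, h⟩ := (sKJ_ne_zero β).1 hβ
    obtain ⟨c1, c2, c3, c4⟩ := zlist_mem hJ hc
    rw [rIdxXY_eq_iff hkn c1 c2 c3 c4] at h
    omega
  · obtain ⟨c, hc, h⟩ := (sKJ_ne_zero a).1 ha
    obtain ⟨d, hd, h'⟩ := (sKJ_ne_zero b).1 hb
    obtain ⟨c1, c2, c3, c4⟩ := zlist_mem hJ hc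
    obtain ⟨d1, d2, d3, d4⟩ := zlist_mem hJ hd
    rw [rIdxXY_eq_iff hkn c1 c2 c3 c4] at h
    rw [rIdxXY_eq_iff hkn d1 d2 d3 d4] at h'
    have key : c = d ∨ (c.1 < d.1 ∧ d.2 < c.2) ∨ (d.1 < c.1 ∧ c.2 < d.2) := by
      by_cases hcd : c = d
      · exact Or.inl hcd
      · right
        have hp := zlist_pairwise k J
        let R : ℕ × ℕ → ℕ × ℕ → Prop := fun c d =>
          (c.1 < d.1 ∧ d.2 < c.2) ∨ (d.1 < c.1 ∧ c.2 < d.2)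
        haveI : Std.Symm R := ⟨fun _ _ h => h.symm⟩
        have hp' : (zlist k J).Pairwise R := hp.imp (fun h => Or.inl h)
        exact hp'.forall hc hd hcd
    obtain ⟨l1, l2⟩ := hab
    rcases key with rfl | key
    · exact cell_inj (by omega) (by omega)
    · exfalso
      omega

lemma exists_J {n k : ℕ} (hkn : k ≤ n) {s : SpRoot n → ℕ} (hs : Good n k s) :
    ∃ J : Finset ℕ, J ⊆ Finset.Icc 1 (2 * n) ∧ J.card = k ∧ s = sKJ n k J := by
  classical
  obtain ⟨g1, g2, g3⟩ := id hs
  have hanti : ∀ a b, s a ≠ 0 → s b ≠ 0 → cx a < cx b → cy b < cy a := by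
    intro a b ha hb hab
    by_contra h
    have := g3 a b ha hb ⟨by omega, by omega⟩
    subst this
    omega
  have hcx : ∀ a b, s a ≠ 0 → s b ≠ 0 → cx a = cx b → a = b := by
    intro a b ha hb hab
    rcases le_total (cy a) (cy b) with h | h
    · exact g3 a b ha hb ⟨by omega, h⟩
    · exact (g3 b a hb ha ⟨by omega, h⟩).symm
  -- rows used by the support
  let P : Finset ℕ := (Finset.Icc 1 k).filter (fun p => ∃ β : SpRoot n, s β ≠ 0 ∧ cx β = p)
  have hP : ∀ p, p ∈ P ↔ ∃ β : SpRoot n, s β ≠ 0 ∧ cx β = p := by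
    intro p
    simp only [P, Finset.mem_filter, Finset.mem_Icc, and_iff_right_iff_imp]
    rintro ⟨β, hβ, rfl⟩
    exact ⟨(cell_bounds β).1, (g2 β hβ).1⟩
  have hg : ∃ g : ℕ → ℕ, ∀ β : SpRoot n, s β ≠ 0 → g (cx β) = cy β := by
    refine ⟨fun p => if h : ∃ β : SpRoot n, s β ≠ 0 ∧ cx β = p then cy h.choose else 0, ?_⟩
    intro β hβ
    have h : ∃ β' : SpRoot n, s β' ≠ 0 ∧ cx β' = cx β := ⟨β, hβ, rfl⟩
    simp only [dif_pos h]
    rw [hcx _ β h.choose_spec.1 hβ h.choose_spec.2]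
  obtain ⟨g, hg⟩ := hg
  have hganti : ∀ p ∈ P, ∀ q ∈ P, p < q → g q < g p := by
    intro p hp q hq hpq
    obtain ⟨a, ha, rfl⟩ := (hP p).1 hp
    obtain ⟨b, hb, rfl⟩ := (hP q).1 hq
    rw [hg a ha, hg b hb]
    exact hanti a b ha hb hpq
  have hgr : ∀ p ∈ P, k < g p ∧ g p ≤ 2 * n := by
    intro p hp
    obtain ⟨a, ha, rfl⟩ := (hP p).1 hp
    rw [hg a ha]
    have := cell_bounds a
    have := g2 a ha
    omega
  have hinj : Set.InjOn g P := by
    intro p hp q hq hpq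
    rcases lt_trichotomy p q with h | h | h
    · have := hganti p hp q hq h; omega
    · exact h
    · have := hganti q hq p hp h; omega
  have hPk : P ⊆ Finset.Icc 1 k := Finset.filter_subset _ _
  let J : Finset ℕ := (Finset.Icc 1 k \ P) ∪ P.image g
  have hJ1 : Finset.Icc 1 k \ J = P := by
    ext p
    simp only [J, Finset.mem_sdiff, Finset.mem_union, Finset.mem_image, not_or, not_and, not_not]
    constructor
    · rintro ⟨h1, h2, -⟩
      exact h2 h1
    · intro h
      refine ⟨hPk h, fun _ => h, ?_⟩
      rintro ⟨q, hq, rfl⟩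
      have := hgr q hq
      have := Finset.mem_Icc.1 (hPk h)
      omega
  have hJ2 : J \ Finset.Icc 1 k = P.image g := by
    ext p
    simp only [J, Finset.mem_sdiff, Finset.mem_union]
    constructor
    · rintro ⟨h1 | h1, h2⟩
      · exact absurd h1.1 h2
      · exact h1
    · intro h
      refine ⟨Or.inr h, ?_⟩
      obtain ⟨q, hq, rfl⟩ := Finset.mem_image.1 h
      have := hgr q hq
      rw [Finset.mem_Icc]
      omega
  have hJs : J ⊆ Finset.Icc 1 (2 * n) := by
    intro p hp
    rw [Finset.mem_Icc]
    rcases Finset.mem_union.1 hp with h | h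
    · have := Finset.mem_Icc.1 (Finset.mem_sdiff.1 h).1
      omega
    · obtain ⟨q, hq, rfl⟩ := Finset.mem_image.1 h
      have := hgr q hq
      omega
  have hJc : J.card = k := by
    have hd : Disjoint (Finset.Icc 1 k \ P) (P.image g) := by
      rw [← hJ2]
      exact Finset.disjoint_left.2 fun a ha hb =>
        (Finset.mem_sdiff.1 hb).2 (Finset.mem_sdiff.1 ha).1
    have h1 : J.card = (Finset.Icc 1 k \ P).card + (P.image g).card :=
      Finset.card_union_of_disjoint hd
    have h2 := Finset.card_sdiff_add_card_eq_card hPk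
    rw [Finset.card_image_of_injOn hinj] at h1
    rw [Nat.card_Icc] at h2
    omega
  have hlist : ((P.image g).sort (· ≤ ·)).reverse = (P.sort (· ≤ ·)).map g := by
    have e1 := List.pairwise_reverse.2 (Finset.sortedLT_sort (P.image g)).pairwise
    have e2 : ((P.sort (· ≤ ·)).map g).Pairwise (fun a b => b < a) := by
      rw [List.pairwise_map]
      refine List.Pairwise.imp_of_mem ?_ (Finset.sortedLT_sort P).pairwise
      intro a b ha hb hab
      exact hganti a ((Finset.mem_sort _).1 ha) b ((Finset.mem_sort _).1 hb) hab
    refine List.Perm.eq_of_pairwise (le := fun a b => b < a) ?_ e1 e2 ?_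
    · intro a b _ _ h1 h2
      omega
    · rw [List.perm_ext_iff_of_nodup (e1.imp fun h => ne_of_gt h) (e2.imp fun h => ne_of_gt h)]
      intro a
      simp
  have hz : zlist k J = (P.sort (· ≤ ·)).map (fun p => (p, g p)) := by
    rw [zlist, hJ1, hJ2, hlist]
    generalize P.sort (· ≤ ·) = l
    induction l with
    | nil => rfl
    | cons c l ih => simp [ih]
  refine ⟨J, hJs, hJc, ?_⟩
  funext β
  have hb1 := g1 β
  have hb2 := (good_sKJ hkn hJs).1 β
  have hiff : s β ≠ 0 ↔ sKJ n k J β ≠ 0 := by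
    rw [sKJ_ne_zero, hz]
    simp only [List.mem_map, Finset.mem_sort]
    constructor
    · intro h
      have hm := (hP (cx β)).2 ⟨β, h, rfl⟩
      refine ⟨_, ⟨cx β, hm, rfl⟩, ?_⟩
      have q1 := hgr _ hm
      have q2 := cell_bounds β
      have q3 := g2 β h
      rw [rIdxXY_eq_iff hkn q2.1 q3.1 q1.1 q1.2, hg β h]
      exact Or.inl ⟨q2.2.2, rfl, rfl⟩
    · rintro ⟨c, ⟨p, hp, rfl⟩, hc⟩
      have q1 := hgr p hp
      obtain ⟨a, ha, rfl⟩ := (hP p).1 hp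
      have q2 := cell_bounds a
      have q3 := g2 a ha
      rw [rIdxXY_eq_iff hkn q2.1 q3.1 q1.1 q1.2, hg a ha] at hc
      have : β = a := cell_inj (by omega) (by omega)
      rw [this]
      exact ha
  omega

/-- For `1 ≤ k ≤ n`, the lattice points of the fundamental symplectic FFLV
polytope satisfy `S(ω_k) = { s_{[k],J} : J ⊆ {1,…,2n}, |J| = k }`. -/
theorem spFFLV_fundamental_lattice_points (n : ℕ) (hn : 2 ≤ n)
    (k : ℕ) (hk1 : 1 ≤ k) (hkn : k ≤ n) :
    Slat n (fun t => if t = k then 1 else 0) =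
      {s | ∃ J : Finset ℕ, J ⊆ Finset.Icc 1 (2*n) ∧ J.card = k ∧ s = sKJ n k J} := by
  ext s
  constructor
  · intro hs
    exact exists_J hkn (good_of_slat hkn hs)
  · rintro ⟨J, hJ, -, rfl⟩
    exact slat_of_good hkn (good_sKJ hkn hJ)
end

section
/- For every 1 ≤ k ≤ n, the map T ↦ s_{[k],J(T)} is a bijection from the set of one-column symplectic PBW tableaux of length k (i.e. SyST_{ω_k}, the PBW-semistandard tableaux of shape ω_k) onto S(ω_k), where J(T) ⊆ {1,…,2n} is the set of entries of the column T. -/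
/-- A one-column symplectic PBW tableau of length `k`: entries `T₁, …, T_k` in `{1,…,2n}`
(identifying `1 < ⋯ < n < n̄ < ⋯ < 1̄` with `{1,…,2n}` via `ī = 2n+1-i`, and row `i`
corresponding to index `⟨i-1, _⟩ : Fin k`) such that
(i) if `T_i ≤ k` then `T_i = i`; (ii) if `T_{i₁} ≠ i₁` and `i₁ < i₂` then `T_{i₁} > T_{i₂}`;
(iii) if `T_i = i` and `T_{i'} = ī` then `i' < i`. -/
def IsColTableau (n k : ℕ) (T : Fin k → ℕ) : Prop :=
  (∀ i, 1 ≤ T i ∧ T i ≤ 2*n) ∧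
  (∀ i, T i ≤ k → T i = i.val + 1) ∧
  (∀ i₁ i₂, T i₁ ≠ i₁.val + 1 → i₁ < i₂ → T i₂ < T i₁) ∧
  (∀ i i' : Fin k, T i = i.val + 1 → T i' = 2*n + 1 - (i.val + 1) → i' < i)

/-- Position (in `1,…,2n-1`) of the second index of a root. -/
def spPos (n : ℕ) (t : ℕ × ℕ × Bool) : ℕ := if t.2.2 = true then 2 * n - t.2.1 else t.2.1

lemma sp_bounds {n : ℕ} (β : SpRoot n) :
    1 ≤ β.val.1 ∧ β.val.1 ≤ spPos n β.val ∧ β.val.1 + spPos n β.val ≤ 2 * n := by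
  obtain ⟨⟨p, q, b⟩, h1, h2, h3, h4⟩ := β
  dsimp only at h1 h2 h3 h4
  have h4' : b = true → q + 1 ≤ n := h4
  cases b <;> simp [spPos] at * <;> omega

lemma sp_ext {n : ℕ} {β γ : SpRoot n} (h1 : β.val.1 = γ.val.1)
    (h2 : spPos n β.val = spPos n γ.val) : β = γ := by
  obtain ⟨⟨p, q, b⟩, a1, a2, a3, a4⟩ := β
  dsimp only at a1 a2 a3 a4
  have a4' : b = true → q + 1 ≤ n := a4
  obtain ⟨⟨p', q', b'⟩, c1, c2, c3, c4⟩ := γ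
  dsimp only at c1 c2 c3 c4
  have c4' : b' = true → q' + 1 ≤ n := c4
  apply Subtype.ext
  cases b <;> cases b' <;> simp [spPos] at * <;> omega

lemma sp_mk {n p a : ℕ} (h1 : 1 ≤ p) (h2 : p ≤ a) (h3 : p + a ≤ 2 * n) :
    ∃ β : SpRoot n, β.val.1 = p ∧ spPos n β.val = a := by
  by_cases h : a ≤ n
  · exact ⟨⟨(p, a, false), by simp [IsSpRootIdx]; omega⟩, rfl, by simp [spPos]⟩
  · exact ⟨⟨(p, 2 * n - a, true), by simp [IsSpRootIdx]; omega⟩, rfl, by simp [spPos]; omega⟩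

lemma sp_step_mono {n : ℕ} {β γ : SpRoot n} (h : SpDyckStep n β.val γ.val) :
    β.val.1 ≤ γ.val.1 ∧ spPos n β.val ≤ spPos n γ.val ∧
      β.val.1 + spPos n β.val < γ.val.1 + spPos n γ.val := by
  obtain ⟨⟨p, q, b⟩, a1, a2, a3, a4⟩ := β
  dsimp only at a1 a2 a3 a4
  have a4' : b = true → q + 1 ≤ n := a4
  obtain ⟨⟨p', q', b'⟩, c1, c2, c3, c4⟩ := γ
  dsimp only at c1 c2 c3 c4
  have c4' : b' = true → q' + 1 ≤ n := c4
  rcases h with h | h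
  · cases b
    · by_cases hq : q = n <;> simp [spPos, qSucc, hq] at * <;> obtain ⟨rfl, rfl, rfl⟩ := h <;>
        simp <;> omega
    · simp [spPos, qSucc] at *
      obtain ⟨rfl, rfl, rfl⟩ := h
      simp; omega
  · simp at h
    obtain ⟨rfl, rfl, rfl⟩ := h
    simp [spPos]

lemma sp_step_right {n : ℕ} {β γ : SpRoot n} (h1 : β.val.1 = γ.val.1)
    (h2 : spPos n γ.val = spPos n β.val + 1) : SpDyckStep n β.val γ.val := by
  obtain ⟨⟨p, q, b⟩, a1, a2, a3, a4⟩ := β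
  dsimp only at a1 a2 a3 a4
  have a4' : b = true → q + 1 ≤ n := a4
  obtain ⟨⟨p', q', b'⟩, c1, c2, c3, c4⟩ := γ
  dsimp only at c1 c2 c3 c4
  have c4' : b' = true → q' + 1 ≤ n := c4
  left
  cases b <;> cases b' <;> simp [spPos, qSucc] at * <;> (try split_ifs) <;> (try simp) <;> omega

lemma sp_step_down {n : ℕ} {β γ : SpRoot n} (h1 : γ.val.1 = β.val.1 + 1)
    (h2 : spPos n γ.val = spPos n β.val) : SpDyckStep n β.val γ.val := by
  obtain ⟨⟨p, q, b⟩, a1, a2, a3, a4⟩ := β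
  dsimp only at a1 a2 a3 a4
  have a4' : b = true → q + 1 ≤ n := a4
  obtain ⟨⟨p', q', b'⟩, c1, c2, c3, c4⟩ := γ
  dsimp only at c1 c2 c3 c4
  have c4' : b' = true → q' + 1 ≤ n := c4
  right
  cases b <;> cases b' <;> simp [spPos] at * <;> omega

lemma sp_reach {n : ℕ} (d : ℕ) : ∀ (β γ : SpRoot n), β.val.1 ≤ γ.val.1 →
    spPos n β.val ≤ spPos n γ.val →
    γ.val.1 + spPos n γ.val = β.val.1 + spPos n β.val + d →
    Relation.ReflTransGen (fun a b : SpRoot n => SpDyckStep n a.val b.val) β γ := by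
  induction d with
  | zero =>
    intro β γ h1 h2 h3
    rw [sp_ext (β := β) (γ := γ) (by omega) (by omega)]
  | succ d ih =>
    intro β γ h1 h2 h3
    have hb := sp_bounds β
    have hg := sp_bounds γ
    by_cases h : spPos n β.val < spPos n γ.val
    · obtain ⟨δ, e1, e2⟩ := sp_mk (n := n) (p := β.val.1) (a := spPos n β.val + 1)
        (by omega) (by omega) (by omega)
      exact Relation.ReflTransGen.head (sp_step_right e1.symm e2)
        (ih δ γ (by omega) (by omega) (by omega))
    · obtain ⟨δ, e1, e2⟩ := sp_mk (n := n) (p := β.val.1 + 1) (a := spPos n β.val)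
        (by omega) (by omega) (by omega)
      exact Relation.ReflTransGen.head (sp_step_down e1 e2)
        (ih δ γ (by omega) (by omega) (by omega))

lemma rtg_extend {α : Type*} {r : α → α → Prop} {a b : α} (h : Relation.ReflTransGen r a b)
    (L : List α) (hL : List.IsChain r (b :: L)) :
    ∃ L' M, List.IsChain r (a :: L') ∧ a :: L' = M ++ b :: L := by
  induction h using Relation.ReflTransGen.head_induction_on with
  | refl => exact ⟨L, [], hL, rfl⟩
  | head h1 _ ih =>
    obtain ⟨L', M, h2, h3⟩ := ih
    exact ⟨_, _ :: M, List.IsChain.cons_cons h1 h2, by rw [h3]; rfl⟩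

lemma sum_ind (k i j : ℕ) : (∑ t ∈ Finset.Icc i j, (((if t = k then 1 else 0 : ℕ)) : ℝ))
    = if i ≤ k ∧ k ≤ j then 1 else 0 := by
  simp [Finset.sum_ite_eq']

lemma cast_list_sum {α : Type*} (s : α → ℕ) (L : List α) :
    (L.map (fun b => (s b : ℝ))).sum = ((L.map s).sum : ℕ) := by
  induction L with
  | nil => simp
  | cons a L ih => simp [ih]

open Classical in
lemma slat_pair {n k : ℕ} (hkn : k ≤ n) {s : SpRoot n → ℕ}
    (hs : s ∈ Slat n (fun t => if t = k then 1 else 0)) (β γ : SpRoot n)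
    (h1 : β.val.1 ≤ γ.val.1) (h2 : spPos n β.val ≤ spPos n γ.val) :
    (if β = γ then s β else s β + s γ) ≤
      if β.val.1 ≤ k ∧ k ≤ spPos n γ.val then 1 else 0 := by
  have hb := sp_bounds β
  have hg := sp_bounds γ
  obtain ⟨a, ha1, ha2⟩ := sp_mk (n := n) (p := β.val.1) (a := β.val.1)
    (by omega) (by omega) (by omega)
  obtain ⟨c, hc1, hc2⟩ := sp_mk (n := n) (p := min (spPos n γ.val) (2 * n - spPos n γ.val))
    (a := spPos n γ.val) (by omega) (by omega) (by omega)
  obtain ⟨L1, M1, hL1, e1⟩ := rtg_extend (sp_reach _ γ c (by omega) (by omega)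
    (Nat.add_sub_of_le (by omega)).symm) [] (List.IsChain.singleton c)
  obtain ⟨L2, M2, hL2, e2⟩ := rtg_extend (sp_reach _ β γ (by omega) (by omega)
    (Nat.add_sub_of_le (by omega)).symm) L1 hL1
  obtain ⟨L3, M3, hL3, e3⟩ := rtg_extend (sp_reach _ a β (by omega) (by omega)
    (Nat.add_sub_of_le (by omega)).symm) L2 hL2
  have hlast : (a :: L3).getLast? = some c := by
    rw [e3, e2, e1, ← List.append_assoc, ← List.append_assoc]; simp
  have ha : a.val = (β.val.1, β.val.1, false) := by
    obtain ⟨⟨p, q, b⟩, x1, x2, x3, x4⟩ := a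
    dsimp only at x1 x2 x3 x4
    have x4' : b = true → q + 1 ≤ n := x4
    cases b <;> simp [spPos] at * <;> omega
  have hc : (spPos n γ.val ≤ n ∧ c.val = (spPos n γ.val, spPos n γ.val, false)) ∨
      (n < spPos n γ.val ∧
        c.val = (2 * n - spPos n γ.val, 2 * n - spPos n γ.val, true)) := by
    obtain ⟨⟨p, q, b⟩, x1, x2, x3, x4⟩ := c
    dsimp only at x1 x2 x3 x4
    have x4' : b = true → q + 1 ≤ n := x4
    cases b <;> simp [spPos] at * <;> omega
  have hD : IsDyckPath n (a :: L3) := by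
    refine ⟨by simp, ?_, ?_, hL3⟩
    · intro h hh
      simp at hh
      subst hh
      exact ⟨β.val.1, by omega, by omega, ha⟩
    · intro l hl
      rw [hlast] at hl
      simp at hl
      subst hl
      rcases hc with ⟨hc, hc'⟩ | ⟨hc, hc'⟩
      · exact Or.inl ⟨_, by omega, hc, hc'⟩
      · exact Or.inr ⟨_, by omega, by omega, hc'⟩
  have key := hs.2 (a :: L3) hD a c rfl hlast _ ha
  have key2 : ((a :: L3).map s).sum ≤
      if β.val.1 ≤ k ∧ k ≤ spPos n γ.val then 1 else 0 := by
    have : ((((a :: L3).map s).sum : ℕ) : ℝ) ≤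
      if β.val.1 ≤ k ∧ k ≤ spPos n γ.val then 1 else 0 := by
      rw [← cast_list_sum]
      rcases hc with ⟨hc, hc'⟩ | ⟨hc, hc'⟩
      · have := key.1 _ hc'
        rwa [sum_ind] at this
      · have := key.2 _ hc'
        rw [sum_ind] at this
        refine this.trans (le_of_eq ?_)
        congr 1
        simp only [eq_iff_iff]
        omega
    exact_mod_cast this
  refine le_trans ?_ key2
  rw [e3]
  split_ifs with hbg
  · simp only [List.map_append, List.map_cons, List.sum_append, List.sum_cons]
    omega
  · rcases M2 with _ | ⟨m, M2⟩
    · simp at e2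
      exact absurd e2.1 hbg
    · have : L2 = M2 ++ γ :: L1 := by simp at e2; exact e2.2
      rw [this]
      simp only [List.map_append, List.map_cons, List.sum_append, List.sum_cons]
      omega

lemma list_sum_le_one {α : Type*} (s : α → ℕ) (h1 : ∀ a, s a ≤ 1) (L : List α)
    (hL : L.Pairwise (fun a b => s a = 0 ∨ s b = 0)) : (L.map s).sum ≤ 1 := by
  induction L with
  | nil => simp
  | cons a L ih =>
    rw [List.pairwise_cons] at hL
    simp only [List.map_cons, List.sum_cons]
    by_cases ha : s a = 0
    · rw [ha]; have := ih hL.2; omega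
    · have : (L.map s).sum = 0 := by
        apply List.sum_eq_zero
        intro x hx
        obtain ⟨b, hb, rfl⟩ := List.mem_map.1 hx
        exact (hL.1 b hb).resolve_left ha
      have := h1 a
      omega

/-- Combinatorial characterisation of the lattice points of `FFLV(ω_k)`. -/
lemma slat_iff {n k : ℕ} (hkn : k ≤ n) (s : SpRoot n → ℕ) :
    s ∈ Slat n (fun t => if t = k then 1 else 0) ↔
      (∀ β, s β ≤ 1) ∧ (∀ β, s β ≠ 0 → β.val.1 ≤ k ∧ k ≤ spPos n β.val) ∧
      (∀ β γ, s β ≠ 0 → s γ ≠ 0 → β.val.1 ≤ γ.val.1 → spPos n β.val ≤ spPos n γ.val → β = γ) := by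
  constructor
  · intro hs
    have hd : ∀ β, s β ≤ if β.val.1 ≤ k ∧ k ≤ spPos n β.val then 1 else 0 := by
      intro β
      have := slat_pair hkn hs β β le_rfl le_rfl
      rwa [if_pos rfl] at this
    refine ⟨?_, ?_, ?_⟩
    · intro β
      have := hd β
      split_ifs at this <;> omega
    · intro β hβ
      have := hd β
      split_ifs at this with h
      · exact h
      · omega
    · intro β γ hβ hγ h1 h2
      by_contra hne
      have := slat_pair hkn hs β γ h1 h2
      rw [if_neg hne] at this
      split_ifs at this <;> omega
  · rintro ⟨h1, h2, h3⟩
    refine ⟨fun β => Nat.cast_nonneg _, ?_⟩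
    intro L hL hd lst hhd hlst i hi
    have hchain : List.IsChain (fun a b : SpRoot n => a.val.1 ≤ b.val.1 ∧
        spPos n a.val ≤ spPos n b.val ∧ a.val.1 + spPos n a.val < b.val.1 + spPos n b.val) L :=
      List.IsChain.imp (fun a b h => sp_step_mono h) hL.2.2.2
    have : IsTrans (SpRoot n) (fun a b : SpRoot n => a.val.1 ≤ b.val.1 ∧
        spPos n a.val ≤ spPos n b.val ∧ a.val.1 + spPos n a.val < b.val.1 + spPos n b.val) :=
      ⟨fun a b c h h' => ⟨by omega, by omega, by omega⟩⟩
    have hpw := List.isChain_iff_pairwise.1 hchain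
    have hsum1 : (L.map s).sum ≤ 1 := by
      apply list_sum_le_one s h1
      refine hpw.imp ?_
      intro a b hab
      by_contra hc
      push Not at hc
      have := h3 a b hc.1 hc.2 hab.1 hab.2.1
      subst this
      omega
    have hmem : ∀ b ∈ L, hd.val.1 ≤ b.val.1 ∧ spPos n b.val ≤ spPos n lst.val := by
      intro b hb
      constructor
      · rcases L with _ | ⟨a, L⟩
        · simp at hb
        · simp at hhd
          subst hhd
          rcases List.mem_cons.1 hb with rfl | hb
          · exact le_rfl
          · exact ((List.pairwise_cons.1 hpw).1 b hb).1
      · obtain ⟨M, rfl⟩ := List.getLast?_eq_some_iff.1 hlst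
        rcases List.mem_append.1 hb with hb | hb
        · exact ((List.pairwise_append.1 hpw).2.2 b hb lst (by simp)).2.1
        · simp at hb
          rw [hb]
    have hbd : (L.map s).sum ≠ 0 → i ≤ k ∧ k ≤ spPos n lst.val := by
      intro hne
      have : ∃ b ∈ L, s b ≠ 0 := by
        by_contra hc
        push Not at hc
        apply hne
        apply List.sum_eq_zero
        intro x hx
        obtain ⟨b, hb, rfl⟩ := List.mem_map.1 hx
        exact hc b hb
      obtain ⟨b, hb, hsb⟩ := this
      have e1 := hmem b hb
      have e2 := h2 b hsb
      rw [hi] at e1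
      simp at e1
      omega
    have fin : ∀ P : Prop, [Decidable P] → (i ≤ k ∧ k ≤ spPos n lst.val → P) →
        (L.map (fun b => (s b : ℝ))).sum ≤ if P then 1 else 0 := by
      intro P _ hP
      rw [cast_list_sum]
      by_cases h0 : (L.map s).sum = 0
      · rw [h0]; split_ifs <;> simp
      · rw [if_pos (hP (hbd h0))]
        exact_mod_cast hsum1
    constructor
    · intro j hj
      rw [sum_ind]
      apply fin
      rw [hj]
      simp [spPos]
    · intro j hj
      rw [sum_ind]
      apply fin
      intro h
      exact ⟨h.1, hkn⟩

lemma tab_gt {n k : ℕ} {T : Fin k → ℕ} (hT : IsColTableau n k T) (i : Fin k)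
    (hi : T i ≠ i.val + 1) : k < T i := by
  by_contra h
  exact hi (hT.2.1 i (by omega))

/-- In a tableau, a non-fixed entry in row `i` is at most `ī`. -/
lemma tab_le_bar {n k : ℕ} (hkn : k ≤ n) {T : Fin k → ℕ} (hT : IsColTableau n k T) (m : ℕ) :
    ∀ i : Fin k, i.val = m → T i ≠ i.val + 1 → T i + i.val ≤ 2 * n := by
  induction m using Nat.strong_induction_on with
  | _ m ih =>
    intro i him hi
    by_contra hlt
    have hb := hT.1 i
    have hik := i.isLt
    have hcl : 2 * n - T i < k := by omega
    let c : Fin k := ⟨2 * n - T i, hcl⟩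
    have hci : c < i := by
      show 2 * n - T i < i.val
      omega
    have hcv : c.val = 2 * n - T i := rfl
    by_cases hc : T c = c.val + 1
    · have h4 := hT.2.2.2 c i hc (by omega)
      exact absurd (lt_trans h4 hci) (lt_irrefl _)
    · have h3 := hT.2.2.1 c i hc hci
      have := ih c.val (by have : c.val < i.val := hci; omega) c rfl hc
      omega

lemma rIdxXY_eq {n p q : ℕ} (hp : 1 ≤ p) (hpq : p < q) (hle : p + q ≤ 2 * n + 1)
    (β : SpRoot n) : rIdxXY n p q = β.val ↔ p = β.val.1 ∧ q = spPos n β.val + 1 := by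
  obtain ⟨⟨p', q', b⟩, h1, h2, h3, h4⟩ := β
  dsimp only at h1 h2 h3 h4
  have h4' : b = true → q' + 1 ≤ n := h4
  unfold rIdxXY rIdx
  cases b <;> simp [spPos] at * <;> split_ifs <;> simp <;> omega

lemma zip_map_self' {α β : Type*} (l : List α) (f : α → β) :
    List.zip l (l.map f) = l.map (fun x => (x, f x)) := by
  induction l with
  | nil => rfl
  | cons a l ih => simp [ih]

open Classical in
lemma sKJ_eq {n k : ℕ} (hkn : k ≤ n) {T : Fin k → ℕ} (hT : IsColTableau n k T)
    (β : SpRoot n) : sKJ n k (Finset.image T Finset.univ) β =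
      if ∃ i : Fin k, i.val + 1 = β.val.1 ∧ T i = spPos n β.val + 1 then 1 else 0 := by
  have hbβ := sp_bounds β
  set f : ℕ → ℕ := fun p => if h : p - 1 < k then T ⟨p - 1, h⟩ else 0 with hf
  have hfT : ∀ i : Fin k, f (i.val + 1) = T i := by
    intro i
    simp [hf]
  set l := (Finset.Icc 1 k \ Finset.image T Finset.univ).sort (· ≤ ·) with hl
  have hmem : ∀ p, p ∈ l ↔ ∃ i : Fin k, i.val + 1 = p ∧ T i ≠ i.val + 1 := by
    intro p
    rw [hl, Finset.mem_sort]
    simp only [Finset.mem_sdiff, Finset.mem_Icc, Finset.mem_image, Finset.mem_univ, true_and]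
    constructor
    · rintro ⟨hp, hno⟩
      refine ⟨⟨p - 1, by omega⟩, by simp; omega, fun h => hno ⟨_, h.trans (by simp; omega)⟩⟩
    · rintro ⟨i, rfl, hi⟩
      refine ⟨by omega, ?_⟩
      rintro ⟨j, hj⟩
      by_cases hjj : T j = j.val + 1
      · have : j = i := Fin.ext (by omega)
        subst this
        exact hi hj
      · have := tab_gt hT j hjj
        omega
  have hlsort : l.Pairwise (· < ·) := by
    have := Finset.sortedLT_sort (Finset.Icc 1 k \ Finset.image T Finset.univ)
    exact this.pairwise
  have hrev : ((Finset.image T Finset.univ \ Finset.Icc 1 k).sort (· ≤ ·)).reverse = l.map f := by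
    have hgt : (l.map f).Pairwise (· > ·) := by
      rw [List.pairwise_map]
      refine hlsort.imp_of_mem ?_
      intro a b ha hb hab
      obtain ⟨i, rfl, hi⟩ := (hmem a).1 ha
      obtain ⟨j, rfl, hj⟩ := (hmem b).1 hb
      rw [hfT, hfT]
      exact hT.2.2.1 i j hi (by rw [Fin.lt_def]; omega)
    have hgt2 : (((Finset.image T Finset.univ \ Finset.Icc 1 k).sort (· ≤ ·)).reverse).Pairwise
        (· > ·) := by
      rw [List.pairwise_reverse]
      exact (Finset.sortedLT_sort _).pairwise
    have hperm : List.Perm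
        (((Finset.image T Finset.univ \ Finset.Icc 1 k).sort (· ≤ ·)).reverse) (l.map f) := by
      rw [List.perm_ext_iff_of_nodup (hgt2.imp (fun h => ne_of_gt h))
        (hgt.imp (fun h => ne_of_gt h))]
      intro q
      rw [List.mem_reverse, Finset.mem_sort, List.mem_map]
      simp only [Finset.mem_sdiff, Finset.mem_Icc, Finset.mem_image, Finset.mem_univ, true_and]
      constructor
      · rintro ⟨⟨i, rfl⟩, hi⟩
        refine ⟨i.val + 1, (hmem _).2 ⟨i, rfl, ?_⟩, hfT i⟩
        have := i.isLt
        omega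
      · rintro ⟨p, hp, rfl⟩
        obtain ⟨i, rfl, hi⟩ := (hmem p).1 hp
        rw [hfT]
        have := tab_gt hT i hi
        exact ⟨⟨i, rfl⟩, by omega⟩
    exact hperm.eq_of_pairwise (fun a b _ _ h h' => by omega) hgt2 hgt
  have hstart : sKJ n k (Finset.image T Finset.univ) β =
      l.countP (fun p => decide (p = β.val.1 ∧ f p = spPos n β.val + 1)) := by
    unfold sKJ
    rw [hrev, ← hl, zip_map_self', List.countP_map]
    apply List.countP_congr
    intro p hp
    obtain ⟨i, rfl, hi⟩ := (hmem p).1 hp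
    have h1 := tab_gt hT i hi
    have h2 := tab_le_bar hkn hT _ i rfl hi
    have := i.isLt
    simp only [Function.comp, decide_eq_true_eq]
    rw [hfT]
    exact rIdxXY_eq (by omega) (by omega) (by omega) β
  rw [hstart]
  have hnd : l.Nodup := hlsort.imp (fun h => ne_of_lt h)
  split_ifs with hex
  · obtain ⟨i, hi1, hi2⟩ := hex
    have : l.countP (fun p => decide (p = β.val.1 ∧ f p = spPos n β.val + 1)) =
        l.count β.val.1 := by
      rw [List.count]
      apply List.countP_congr
      intro p _
      simp only [decide_eq_true_eq, beq_iff_eq]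
      constructor
      · exact fun h => h.1
      · rintro rfl
        exact ⟨rfl, by rw [← hi1, hfT, hi2]⟩
    rw [this]
    exact List.count_eq_one_of_mem hnd ((hmem _).2 ⟨i, hi1, by omega⟩)
  · rw [List.countP_eq_zero]
    intro p hp
    obtain ⟨i, rfl, hi⟩ := (hmem p).1 hp
    simp only [decide_eq_true_eq]
    rintro ⟨e1, e2⟩
    rw [hfT] at e2
    exact hex ⟨i, e1, e2⟩

lemma tab_inj_aux {n k : ℕ} (hkn : k ≤ n) {T T' : Fin k → ℕ} (hT : IsColTableau n k T)
    (hT' : IsColTableau n k T')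
    (h : sKJ n k (Finset.image T Finset.univ) = sKJ n k (Finset.image T' Finset.univ))
    (i : Fin k) (hi : T i ≠ i.val + 1) : T' i = T i := by
  have h1 := tab_gt hT i hi
  have h2 := tab_le_bar hkn hT _ i rfl hi
  have h3 := i.isLt
  obtain ⟨β, e1, e2⟩ := sp_mk (n := n) (p := i.val + 1) (a := T i - 1)
    (by omega) (by omega) (by omega)
  have := congrFun h β
  rw [sKJ_eq hkn hT, sKJ_eq hkn hT', if_pos ⟨i, e1.symm, by omega⟩] at this
  split_ifs at this with hex
  · obtain ⟨j, hj1, hj2⟩ := hex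
    have : j = i := Fin.ext (by omega)
    subst this
    omega

/-- For `1 ≤ k ≤ n`, the map `T ↦ s_{[k],J(T)}` is a bijection from the set
of one-column symplectic PBW tableaux of length `k` onto `S(ω_k)`, where `J(T)` is the set of
entries of the column `T`. -/
theorem spFFLV_column_tableau_bijection (n : ℕ) (hn : 2 ≤ n)
    (k : ℕ) (hk1 : 1 ≤ k) (hkn : k ≤ n) :
    Set.BijOn (fun T : Fin k → ℕ => sKJ n k (Finset.image T Finset.univ))
      {T | IsColTableau n k T}
      (Slat n (fun t => if t = k then 1 else 0)) := by
  refine ⟨?_, ?_, ?_⟩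
  · intro T hT
    have hT : IsColTableau n k T := hT
    rw [slat_iff hkn]
    have hval : ∀ β, sKJ n k (Finset.image T Finset.univ) β ≠ 0 →
        ∃ i : Fin k, i.val + 1 = β.val.1 ∧ T i = spPos n β.val + 1 := by
      intro β hβ
      by_contra hc
      rw [sKJ_eq hkn hT, if_neg hc] at hβ
      exact hβ rfl
    refine ⟨?_, ?_, ?_⟩
    · intro β
      show sKJ n k (Finset.image T Finset.univ) β ≤ 1
      rw [sKJ_eq hkn hT]
      split_ifs <;> omega
    · intro β hβ
      obtain ⟨i, h1, h2⟩ := hval β hβ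
      have hb := sp_bounds β
      have := tab_gt hT i (by omega)
      have := i.isLt
      omega
    · intro β γ hβ hγ h1 h2
      obtain ⟨i, hi1, hi2⟩ := hval β hβ
      obtain ⟨j, hj1, hj2⟩ := hval γ hγ
      have hb := sp_bounds β
      by_cases hij : i < j
      · have := hT.2.2.1 i j (by omega) hij
        omega
      · have hij : i = j := by
          apply Fin.ext
          rw [Fin.lt_def] at hij
          omega
        subst hij
        exact sp_ext (by omega) (by omega)
  · intro T hT T' hT' h
    funext i
    by_cases hi : T i = i.val + 1
    · by_cases hi' : T' i = i.val + 1
      · rw [hi, hi']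
      · exact tab_inj_aux hkn hT' hT h.symm i hi'
    · exact (tab_inj_aux hkn hT hT' h i hi).symm
  · intro s hs
    rw [slat_iff hkn] at hs
    obtain ⟨h1, h2, h3⟩ := hs
    classical
    set T : Fin k → ℕ := fun i =>
      if h : ∃ β : SpRoot n, β.val.1 = i.val + 1 ∧ s β ≠ 0 then spPos n h.choose.val + 1
      else i.val + 1 with hTdef
    have hTpos : ∀ (i : Fin k) (β : SpRoot n), β.val.1 = i.val + 1 → s β ≠ 0 →
        T i = spPos n β.val + 1 := by
      intro i β e1 e2
      have h : ∃ β : SpRoot n, β.val.1 = i.val + 1 ∧ s β ≠ 0 := ⟨β, e1, e2⟩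
      have hc := h.choose_spec
      have : h.choose = β := by
        rcases le_total (spPos n h.choose.val) (spPos n β.val) with hle | hle
        · exact h3 _ _ hc.2 e2 (by omega) hle
        · exact (h3 _ _ e2 hc.2 (by omega) hle).symm
      simp only [hTdef]
      rw [dif_pos h, this]
    have hTneg : ∀ i : Fin k, T i ≠ i.val + 1 →
        ∃ β : SpRoot n, β.val.1 = i.val + 1 ∧ s β ≠ 0 ∧ T i = spPos n β.val + 1 := by
      intro i hi
      by_cases h : ∃ β : SpRoot n, β.val.1 = i.val + 1 ∧ s β ≠ 0
      · obtain ⟨β, e1, e2⟩ := h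
        exact ⟨β, e1, e2, hTpos i β e1 e2⟩
      · exact absurd (by simp only [hTdef]; rw [dif_neg h]) hi
    have hT : IsColTableau n k T := by
      refine ⟨?_, ?_, ?_, ?_⟩
      · intro i
        have := i.isLt
        by_cases hi : T i = i.val + 1
        · omega
        · obtain ⟨β, e1, e2, e3⟩ := hTneg i hi
          have := sp_bounds β
          omega
      · intro i hik
        by_contra hi
        obtain ⟨β, e1, e2, e3⟩ := hTneg i hi
        have := h2 β e2
        omega
      · intro i j hi hij
        rw [Fin.lt_def] at hij
        obtain ⟨β, e1, e2, e3⟩ := hTneg i hi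
        have hk := h2 β e2
        by_cases hj : T j = j.val + 1
        · have := j.isLt
          omega
        · obtain ⟨γ, f1, f2, f3⟩ := hTneg j hj
          by_contra hc
          have := h3 β γ e2 f2 (by omega) (by omega)
          subst this
          omega
      · intro i j hi hj
        have := i.isLt
        have := j.isLt
        obtain ⟨γ, f1, f2, f3⟩ := hTneg j (by omega)
        have := sp_bounds γ
        rw [Fin.lt_def]
        by_contra hc
        have hij : j = i := Fin.ext (by omega)
        subst hij
        omega
    refine ⟨T, hT, ?_⟩
    funext β
    show sKJ n k (Finset.image T Finset.univ) β = s β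
    rw [sKJ_eq hkn hT]
    have hb := sp_bounds β
    split_ifs with hex
    · obtain ⟨i, hi1, hi2⟩ := hex
      obtain ⟨γ, f1, f2, f3⟩ := hTneg i (by omega)
      have : γ = β := sp_ext (by omega) (by omega)
      subst this
      have := h1 γ
      omega
    · by_contra hne
      have hne : s β ≠ 0 := fun h => hne h.symm
      have hk := h2 β hne
      exact hex ⟨⟨β.val.1 - 1, by omega⟩, by simp; omega,
        hTpos _ β (by simp; omega) hne⟩
end

section
/- For every dominant weight λ = m_1ω_1 + … + m_nω_n, the map ρ_λ : SyST_λ → ℕ^{Φ⁺} defined by ρ_λ(T) := Σ_{j=1}^{λ_1} s_{[μ_j], J(T^j)}, where T^j denotes the j-th column of T and μ_j its length, is a well-defined bijection from SyST_λ onto S(λ). -/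
/-- `λ_i = m_i + ⋯ + m_n`, the parts of the partition attached to `λ = m₁ω₁ + ⋯ + m_nω_n`. -/
def lamPart (n : ℕ) (m : ℕ → ℕ) (i : ℕ) : ℕ := ∑ t ∈ Finset.Icc i n, m t

/-- `μ_j`: the length of the `j`-th column of the Young diagram `Y_λ`. -/
def colLen (n : ℕ) (m : ℕ → ℕ) (j : ℕ) : ℕ :=
  ((Finset.Icc 1 n).filter (fun i => j ≤ lamPart n m i)).card

/-- A symplectic PBW-semistandard tableau of shape `λ`, encoded as a filling
`T : ℕ → ℕ → ℕ` ((row, column) ↦ entry) that vanishes outside the Young diagram `Y_λ`: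
columnwise conditions (i)–(iii) of symplectic PBW tableaux, plus the semistandardity
condition (iv). -/
def IsSyST (n : ℕ) (m : ℕ → ℕ) (T : ℕ → ℕ → ℕ) : Prop :=
  (∀ i j : ℕ, ¬ (1 ≤ j ∧ j ≤ lamPart n m 1 ∧ 1 ≤ i ∧ i ≤ colLen n m j) → T i j = 0) ∧
  (∀ i j : ℕ, 1 ≤ j → j ≤ lamPart n m 1 → 1 ≤ i → i ≤ colLen n m j →
      1 ≤ T i j ∧ T i j ≤ 2*n) ∧
  (∀ i j : ℕ, 1 ≤ j → j ≤ lamPart n m 1 → 1 ≤ i → i ≤ colLen n m j →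
      T i j ≤ colLen n m j → T i j = i) ∧
  (∀ i₁ i₂ j : ℕ, 1 ≤ j → j ≤ lamPart n m 1 → 1 ≤ i₁ → i₁ < i₂ → i₂ ≤ colLen n m j →
      T i₁ j ≠ i₁ → T i₂ j < T i₁ j) ∧
  (∀ i i' j : ℕ, 1 ≤ j → j ≤ lamPart n m 1 → 1 ≤ i → i ≤ colLen n m j →
      1 ≤ i' → i' ≤ colLen n m j → T i j = i → T i' j = 2*n + 1 - i → i' < i) ∧
  (∀ i j : ℕ, 2 ≤ j → j ≤ lamPart n m 1 → 1 ≤ i → i ≤ colLen n m j →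
      ∃ i' : ℕ, i ≤ i' ∧ i' ≤ colLen n m (j-1) ∧ T i j ≤ T i' (j-1))

/-- The map `ρ_λ : SyST_λ → ℕ^{Φ⁺}`, `T ↦ Σ_j s_{[μ_j], J(Tʲ)}` over the columns `Tʲ`. -/
noncomputable def rhoMap (n : ℕ) (m : ℕ → ℕ) (T : ℕ → ℕ → ℕ) : SpRoot n → ℕ :=
  fun β => ∑ j ∈ Finset.Icc 1 (lamPart n m 1),
    sKJ n (colLen n m j) ((Finset.Icc 1 (colLen n m j)).image (fun i => T i j)) β

namespace SpFFLV

/-- Row coordinate of a root. -/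
def rx {n : ℕ} (β : SpRoot n) : ℕ := β.val.1

/-- Column coordinate of a root in the staircase picture. -/
def ry {n : ℕ} (β : SpRoot n) : ℕ :=
  if β.val.2.2 = true then 2*n + 1 - β.val.2.1 else β.val.2.1 + 1

lemma r_prop {n : ℕ} (β : SpRoot n) : 1 ≤ rx β ∧ rx β < ry β ∧ rx β + ry β ≤ 2*n+1 := by
  obtain ⟨⟨i, j, b⟩, h⟩ := β
  have h2 : 1 ≤ i ∧ i ≤ j ∧ j ≤ n ∧ (b = true → j+1 ≤ n) := h
  cases b <;> simp [rx, ry] at h2 ⊢ <;> omega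

lemma r_ext {n : ℕ} (β γ : SpRoot n) (h1 : rx β = rx γ) (h2 : ry β = ry γ) : β = γ := by
  obtain ⟨⟨i, j, b⟩, h⟩ := β
  obtain ⟨⟨i', j', b'⟩, h'⟩ := γ
  have h3 : 1 ≤ i ∧ i ≤ j ∧ j ≤ n ∧ (b = true → j+1 ≤ n) := h
  have h4 : 1 ≤ i' ∧ i' ≤ j' ∧ j' ≤ n ∧ (b' = true → j'+1 ≤ n) := h'
  apply Subtype.ext
  cases b <;> cases b' <;> simp [rx, ry] at h1 h2 h3 h4 ⊢ <;> omega

/-- The root with given coordinates. -/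
def mkR (n x y : ℕ) (h : 1 ≤ x ∧ x < y ∧ x + y ≤ 2*n+1) : SpRoot n :=
  ⟨if y ≤ n + 1 then (x, y-1, false) else (x, 2*n+1-y, true), by
    split_ifs <;> simp [IsSpRootIdx] <;> omega⟩

lemma rx_mkR (n x y : ℕ) (h) : rx (mkR n x y h) = x := by
  unfold rx mkR; split_ifs <;> rfl

lemma ry_mkR (n x y : ℕ) (h) : ry (mkR n x y h) = y := by
  unfold ry mkR
  by_cases hy : y ≤ n + 1 <;> simp [hy] <;> omega

lemma rIdxXY_iff {n : ℕ} (β : SpRoot n) (x y : ℕ) (h : 1 ≤ x ∧ x < y ∧ x + y ≤ 2*n+1) :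
    rIdxXY n x y = β.val ↔ x = rx β ∧ y = ry β := by
  have key : rIdxXY n x y = (mkR n x y h).val := by
    unfold rIdxXY mkR rIdx
    dsimp only
    have hx : x ≤ n := by omega
    have hxy : y ≤ 2*n+1-x := by omega
    rcases lt_trichotomy y (n+1) with hy | hy | hy
    · rw [if_pos (by omega), if_pos (by omega)]
    · subst hy
      rw [if_neg (by omega), if_pos hx, if_pos hxy, if_pos (by simp; omega), if_pos le_rfl]
      simp; omega
    · rw [if_neg (by omega), if_pos hx, if_pos hxy, if_neg (by simp; omega), if_neg (by omega)]
  rw [key]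
  constructor
  · intro e
    have : mkR n x y h = β := Subtype.ext e
    rw [← this, rx_mkR, ry_mkR]; simp
  · rintro ⟨e1, e2⟩
    have : mkR n x y h = β := r_ext _ _ (by rw [rx_mkR, e1]) (by rw [ry_mkR, e2])
    rw [this]

lemma step_iff {n : ℕ} (a b : SpRoot n) : SpDyckStep n a.val b.val ↔
    (rx b = rx a ∧ ry b = ry a + 1) ∨ (rx b = rx a + 1 ∧ ry b = ry a) := by
  obtain ⟨⟨i, j, c⟩, h⟩ := a
  obtain ⟨⟨i', j', c'⟩, h'⟩ := b
  have h3 : 1 ≤ i ∧ i ≤ j ∧ j ≤ n ∧ (c = true → j+1 ≤ n) := h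
  have h4 : 1 ≤ i' ∧ i' ≤ j' ∧ j' ≤ n ∧ (c' = true → j'+1 ≤ n) := h'
  by_cases hj : j = n <;>
  cases c <;> cases c' <;>
    simp [rx, ry, SpDyckStep, qSucc, hj] at h3 h4 ⊢ <;> omega

lemma lam_zero {n : ℕ} (m : ℕ → ℕ) {i : ℕ} (h : n < i) : lamPart n m i = 0 := by
  unfold lamPart; rw [Finset.Icc_eq_empty (by omega)]; rfl

lemma lam_anti {n : ℕ} (m : ℕ → ℕ) {i k : ℕ} (h : i ≤ k) : lamPart n m k ≤ lamPart n m i :=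
  Finset.sum_le_sum_of_subset (Finset.Icc_subset_Icc_left h)

lemma lam_split {n : ℕ} (m : ℕ → ℕ) {i k : ℕ} (h : i ≤ k) (hk : k ≤ n) :
    ∑ t ∈ Finset.Icc i k, m t + lamPart n m (k+1) = lamPart n m i := by
  unfold lamPart
  rw [← Finset.sum_union]
  · congr 1; ext t; simp; omega
  · rw [Finset.disjoint_left]; intro t; simp; omega

lemma colLen_le {n : ℕ} (m : ℕ → ℕ) (j : ℕ) : colLen n m j ≤ n := by
  unfold colLen
  exact (Finset.card_filter_le _ _).trans (by simp)

lemma le_colLen {n : ℕ} (m : ℕ → ℕ) {p j : ℕ} (hp : 1 ≤ p) (hj : 1 ≤ j) :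
    p ≤ colLen n m j ↔ j ≤ lamPart n m p := by
  constructor
  · intro h
    by_contra hc
    have : (Finset.Icc 1 n).filter (fun i => j ≤ lamPart n m i) ⊆ Finset.Icc 1 (p-1) := by
      intro i hi
      simp at hi ⊢
      refine ⟨hi.1.1, ?_⟩
      by_contra h2
      have := lam_anti (n := n) m (i := p) (k := i) (by omega)
      omega
    have := Finset.card_le_card this
    unfold colLen at h
    simp at this
    omega
  · intro h
    have hpn : p ≤ n := by
      by_contra hc
      rw [lam_zero m (by omega)] at h; omega
    have : Finset.Icc 1 p ⊆ (Finset.Icc 1 n).filter (fun i => j ≤ lamPart n m i) := by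
      intro i hi
      simp at hi ⊢
      have := lam_anti (n := n) m (i := i) (k := p) (by omega)
      omega
    have := Finset.card_le_card this
    unfold colLen
    simpa using this

/-- The order ideal attached to the `j`-th column. -/
def inD (n : ℕ) (m : ℕ → ℕ) (T : ℕ → ℕ → ℕ) (j i y : ℕ) : Prop :=
  ∃ i', i ≤ i' ∧ i' ≤ colLen n m j ∧ y ≤ T i' j

lemma inD_mono {n : ℕ} {m : ℕ → ℕ} {T : ℕ → ℕ → ℕ} {j i y i₂ y₂ : ℕ} (hi : i ≤ i₂) (hy : y ≤ y₂)
    (h : inD n m T j i₂ y₂) : inD n m T j i y := by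
  obtain ⟨a, b, c, d⟩ := h
  exact ⟨a, hi.trans b, c, hy.trans d⟩

section tab
variable {n : ℕ} {m : ℕ → ℕ} {T : ℕ → ℕ → ℕ}

/-- Nonfixed entries exceed the column length. -/
lemma nonfix (hT : IsSyST n m T) {i j : ℕ} (hj : 1 ≤ j) (hjL : j ≤ lamPart n m 1) (hi : 1 ≤ i)
    (hik : i ≤ colLen n m j) (hne : T i j ≠ i) : colLen n m j < T i j := by
  by_contra h
  exact hne (hT.2.2.1 i j hj hjL hi hik (by omega))

lemma T_ge (hT : IsSyST n m T) {i j : ℕ} (hj : 1 ≤ j) (hjL : j ≤ lamPart n m 1) (hi : 1 ≤ i)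
    (hik : i ≤ colLen n m j) : i ≤ T i j := by
  by_cases h : T i j = i
  · omega
  · have := nonfix hT hj hjL hi hik h
    omega

lemma T_region (hT : IsSyST n m T) {j : ℕ} (hj : 1 ≤ j) (hjL : j ≤ lamPart n m 1) :
    ∀ i : ℕ, 1 ≤ i → i ≤ colLen n m j → T i j + i ≤ 2*n+1 := by
  intro i
  induction i using Nat.strong_induction_on with
  | _ i ih =>
    intro hi hik
    by_contra hc
    have hkn := colLen_le (n := n) m j
    have hr := hT.2.1 i j hj hjL hi hik
    have hlt : 2*n+1 - T i j < i := by omega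
    by_cases hf : T (2*n+1 - T i j) j = 2*n+1 - T i j
    · have := hT.2.2.2.2.1 (2*n+1 - T i j) i j hj hjL (by omega) (by omega) hi hik hf (by omega)
      omega
    · have h1 := hT.2.2.2.1 (2*n+1 - T i j) i j hj hjL (by omega) hlt hik hf
      have h2 := ih (2*n+1 - T i j) hlt (by omega) (by omega)
      omega

/-- Entries in terms of the order ideal. -/
lemma T_eq_iff (hT : IsSyST n m T) {j p q : ℕ} (hj : 1 ≤ j) (hjL : j ≤ lamPart n m 1) (hp : 1 ≤ p)
    (hpq : p < q) : (p ≤ colLen n m j ∧ T p j = q) ↔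
      (inD n m T j p q ∧ ¬ inD n m T j (p+1) q ∧ ¬ inD n m T j p (q+1)) := by
  constructor
  · rintro ⟨hk, e⟩
    have hne : T p j ≠ p := by omega
    have hb := nonfix hT hj hjL hp hk hne
    refine ⟨⟨p, le_rfl, hk, e.ge⟩, ?_, ?_⟩
    · rintro ⟨i, h1, h2, h3⟩
      have := hT.2.2.2.1 p i j hj hjL hp (by omega) h2 hne
      omega
    · rintro ⟨i, h1, h2, h3⟩
      by_cases hip : i = p
      · subst hip; omega
      have := hT.2.2.2.1 p i j hj hjL hp (by omega) h2 hne
      omega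
  · rintro ⟨⟨i, h1, h2, h3⟩, hb, hc⟩
    have hip : i = p := by
      by_contra hne
      exact hb ⟨i, by omega, h2, h3⟩
    subst hip
    refine ⟨h2, ?_⟩
    by_contra hne
    exact hc ⟨i, le_rfl, h2, by omega⟩

lemma sKJ_eq (hT : IsSyST n m T) {j : ℕ} (hj : 1 ≤ j) (hjL : j ≤ lamPart n m 1) (β : SpRoot n) :
    sKJ n (colLen n m j) ((Finset.Icc 1 (colLen n m j)).image (fun i => T i j)) β =
      if rx β ≤ colLen n m j ∧ T (rx β) j = ry β then 1 else 0 := by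
  set k := colLen n m j with hk
  set P : Finset ℕ := (Finset.Icc 1 k).filter (fun i => T i j ≠ i) with hP
  have hA : Finset.Icc 1 k \ (Finset.Icc 1 k).image (fun i => T i j) = P := by
    ext i
    simp only [hP, Finset.mem_sdiff, Finset.mem_image, Finset.mem_filter, Finset.mem_Icc]
    constructor
    · rintro ⟨h1, h2⟩
      exact ⟨h1, fun e => h2 ⟨i, h1, e⟩⟩
    · rintro ⟨h1, h2⟩
      refine ⟨h1, ?_⟩
      rintro ⟨i', h3, e⟩
      have := hT.2.2.1 i' j hj hjL h3.1 h3.2 (by omega)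
      have : i' = i := by omega
      subst this; exact h2 e
  have hB : (Finset.Icc 1 k).image (fun i => T i j) \ Finset.Icc 1 k = P.image (fun i => T i j) := by
    ext q
    simp only [hP, Finset.mem_sdiff, Finset.mem_image, Finset.mem_filter, Finset.mem_Icc]
    constructor
    · rintro ⟨⟨i, h1, e⟩, h2⟩
      exact ⟨i, ⟨h1, by omega⟩, e⟩
    · rintro ⟨i, ⟨h1, h2⟩, e⟩
      have := nonfix hT hj hjL h1.1 h1.2 h2
      exact ⟨⟨i, h1, e⟩, by omega⟩
  have hanti : ∀ a ∈ P, ∀ b ∈ P, a < b → T b j < T a j := by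
    intro a ha b hb hab
    simp only [hP, Finset.mem_filter, Finset.mem_Icc] at ha hb
    exact hT.2.2.2.1 a b j hj hjL ha.1.1 hab hb.1.2 ha.2
  have hinj : Set.InjOn (fun i => T i j) P := by
    intro a ha b hb e
    dsimp only at e
    rcases lt_trichotomy a b with h | h | h
    · have := hanti a ha b hb h; omega
    · exact h
    · have := hanti b hb a ha h; omega
  have hsort : ((P.image (fun i => T i j)).sort (· ≤ ·)).reverse
      = (P.sort (· ≤ ·)).map (fun i => T i j) := by
    apply List.Perm.eq_of_pairwise (le := fun a b : ℕ => b ≤ a)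
    · intro a b _ _ h1 h2; omega
    · rw [List.pairwise_reverse]
      exact Finset.pairwise_sort _ _
    · rw [List.pairwise_map]
      have h := (Finset.sortedLT_sort P).pairwise
      refine h.imp_of_mem ?_
      intro a b ha hb hab
      exact (hanti a (by simpa using ha) b (by simpa using hb) hab).le
    · apply (List.reverse_perm _).trans
      rw [List.perm_ext_iff_of_nodup]
      · intro a; simp
      · exact Finset.sort_nodup _ _
      · refine (List.nodup_map_iff_inj_on (Finset.sort_nodup _ _)).2 ?_
        intro a ha b hb e
        exact hinj (by simpa using ha) (by simpa using hb) e
  have hzip : List.zip (P.sort (· ≤ ·)) ((P.sort (· ≤ ·)).map (fun i => T i j))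
      = (P.sort (· ≤ ·)).map (fun i => (i, T i j)) := by
    generalize (P.sort (· ≤ ·)) = l
    induction l with
    | nil => rfl
    | cons a l ih => simp [ih]
  unfold sKJ
  rw [hA, hB, hsort, hzip, List.countP_map]
  have hcongr : List.countP ((fun pq : ℕ × ℕ => decide (rIdxXY n pq.1 pq.2 = β.val)) ∘
        (fun i => (i, T i j))) (P.sort (· ≤ ·))
      = List.countP (fun i => decide (i = rx β ∧ T i j = ry β)) (P.sort (· ≤ ·)) := by
    apply List.countP_congr
    intro i hi
    have hi' : i ∈ P := by simpa using hi
    simp only [hP, Finset.mem_filter, Finset.mem_Icc] at hi'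
    have h1 := nonfix hT hj hjL hi'.1.1 hi'.1.2 hi'.2
    have h2 := T_region hT hj hjL i hi'.1.1 hi'.1.2
    simp only [Function.comp, decide_eq_true_eq]
    exact rIdxXY_iff β i (T i j) ⟨hi'.1.1, by omega, by omega⟩
  rw [hcongr]
  have hr := r_prop β
  split_ifs with hc
  · have hmem : rx β ∈ P.sort (· ≤ ·) := by
      simp only [Finset.mem_sort, hP, Finset.mem_filter, Finset.mem_Icc]
      omega
    have : List.countP (fun i => decide (i = rx β ∧ T i j = ry β)) (P.sort (· ≤ ·))
        = List.count (rx β) (P.sort (· ≤ ·)) := by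
      unfold List.count
      apply List.countP_congr
      intro i _
      simp only [decide_eq_true_eq, beq_iff_eq]
      constructor
      · exact fun h => h.1
      · rintro rfl; exact ⟨rfl, hc.2⟩
    rw [this]
    exact List.count_eq_one_of_mem (Finset.sort_nodup _ _) hmem
  · rw [List.countP_eq_zero]
    intro i hi
    have hi' : i ∈ P := by simpa using hi
    simp only [hP, Finset.mem_filter, Finset.mem_Icc] at hi'
    simp only [decide_eq_true_eq]
    rintro ⟨rfl, e⟩
    exact hc ⟨hi'.1.2, e⟩

open Classical in
/-- The order-reversing function attached to a tableau. -/
noncomputable def gT (n : ℕ) (m : ℕ → ℕ) (T : ℕ → ℕ → ℕ) (i y : ℕ) : ℕ :=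
  ((Finset.Icc 1 (lamPart n m 1)).filter (fun j => inD n m T j i y)).card

lemma inD_pred (hT : IsSyST n m T) {i y : ℕ} (hi : 1 ≤ i) {j j' : ℕ} (h1 : 1 ≤ j) (hjj : j ≤ j')
    (hj' : j' ≤ lamPart n m 1) (h : inD n m T j' i y) : inD n m T j i y := by
  induction j', hjj using Nat.le_induction with
  | base => exact h
  | succ j' hle ih =>
    apply ih (by omega)
    obtain ⟨a, b, c, d⟩ := h
    obtain ⟨a', b', c', d'⟩ := hT.2.2.2.2.2 a (j'+1) (by omega) hj' (by omega) c
    simp only [Nat.add_sub_cancel] at c' d'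
    exact ⟨a', by omega, c', by omega⟩

lemma card_initial (L : ℕ) (P : ℕ → Prop) [DecidablePred P]
    (hP : ∀ j j', 1 ≤ j → j ≤ j' → j' ≤ L → P j' → P j) (j : ℕ) (hj : 1 ≤ j) (hjL : j ≤ L) :
    P j ↔ j ≤ ((Finset.Icc 1 L).filter P).card := by
  constructor
  · intro h
    have : Finset.Icc 1 j ⊆ (Finset.Icc 1 L).filter P := by
      intro t ht
      simp at ht ⊢
      exact ⟨by omega, hP t j ht.1 ht.2 hjL h⟩
    simpa using Finset.card_le_card this
  · intro h
    by_contra hc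
    have : (Finset.Icc 1 L).filter P ⊆ Finset.Icc 1 (j-1) := by
      intro t ht
      simp at ht ⊢
      refine ⟨ht.1.1, ?_⟩
      by_contra h2
      exact hc (hP j t hj (by omega) ht.1.2 ht.2)
    have := Finset.card_le_card this
    simp at this
    omega

open Classical in
lemma inD_iff (hT : IsSyST n m T) {i y j : ℕ} (hi : 1 ≤ i) (h1 : 1 ≤ j) (hjL : j ≤ lamPart n m 1) :
    inD n m T j i y ↔ j ≤ gT n m T i y := by
  exact card_initial (lamPart n m 1) (fun j => inD n m T j i y)
    (fun j j' a b c d => inD_pred hT hi a b c d) j h1 hjL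

open Classical in
lemma gT_le (i y : ℕ) : gT n m T i y ≤ lamPart n m 1 := by
  unfold gT
  exact (Finset.card_filter_le _ _).trans (by simp)

open Classical in
lemma gT_mono {i y i₂ y₂ : ℕ} (hi : i ≤ i₂) (hy : y ≤ y₂) : gT n m T i₂ y₂ ≤ gT n m T i y := by
  unfold gT
  apply Finset.card_le_card
  intro j hj
  simp at hj ⊢
  exact ⟨hj.1, inD_mono hi hy hj.2⟩

lemma gT_diag (hT : IsSyST n m T) {p : ℕ} (hp : 1 ≤ p) : gT n m T p p = lamPart n m p := by
  have : ∀ j, 1 ≤ j → j ≤ lamPart n m 1 → (j ≤ gT n m T p p ↔ j ≤ lamPart n m p) := by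
    intro j h1 h2
    rw [← inD_iff hT hp h1 h2, ← le_colLen m hp h1]
    constructor
    · rintro ⟨i, a, b, c⟩; omega
    · intro h
      exact ⟨p, le_rfl, h, T_ge hT h1 h2 hp h⟩
  have hl := lam_anti (n := n) m hp
  have hg := gT_le (n := n) (m := m) (T := T) p p
  apply le_antisymm
  · by_contra hc
    have := (this _ (by omega) hg).1 le_rfl
    omega
  · by_contra hc
    have := (this _ (by omega) hl).2 le_rfl
    omega

lemma gT_out (hT : IsSyST n m T) {p q : ℕ} (hp : 1 ≤ p) (h : 2*n+1 < p + q) :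
    gT n m T p q = 0 := by
  by_contra hc
  have hg := gT_le (n := n) (m := m) (T := T) p q
  obtain ⟨i, a, b, c⟩ := (inD_iff hT (i := p) (y := q) (j := 1) hp le_rfl (by omega)).2 (by omega)
  have := T_region hT (j := 1) le_rfl (by omega) i (by omega) b
  have hkn := colLen_le (n := n) m 1
  have : 1 ≤ i := by omega
  rcases Nat.lt_or_ge i p with h' | h'
  · omega
  · omega

lemma rho_eq (hT : IsSyST n m T) (β : SpRoot n) :
    rhoMap n m T β + max (gT n m T (rx β + 1) (ry β)) (gT n m T (rx β) (ry β + 1))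
      = gT n m T (rx β) (ry β) := by
  have hr := r_prop β
  have h1 : rhoMap n m T β = ((Finset.Icc 1 (lamPart n m 1)).filter
      (fun j => rx β ≤ colLen n m j ∧ T (rx β) j = ry β)).card := by
    rw [Finset.card_filter]
    unfold rhoMap
    apply Finset.sum_congr rfl
    intro j hj
    simp only [Finset.mem_Icc] at hj
    exact sKJ_eq hT hj.1 hj.2 β
  have h2 : (Finset.Icc 1 (lamPart n m 1)).filter
      (fun j => rx β ≤ colLen n m j ∧ T (rx β) j = ry β)
      = Finset.Ioc (max (gT n m T (rx β + 1) (ry β)) (gT n m T (rx β) (ry β + 1)))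
        (gT n m T (rx β) (ry β)) := by
    ext j
    have hg := gT_le (n := n) (m := m) (T := T) (rx β) (ry β)
    simp only [Finset.mem_filter, Finset.mem_Icc, Finset.mem_Ioc]
    constructor
    · rintro ⟨⟨a, b⟩, c⟩
      rw [T_eq_iff hT a b hr.1 hr.2.1, inD_iff hT hr.1 a b, inD_iff hT (by omega) a b,
        inD_iff hT hr.1 a b] at c
      omega
    · intro h
      have a : 1 ≤ j := by omega
      have b : j ≤ lamPart n m 1 := by omega
      refine ⟨⟨a, b⟩, ?_⟩
      rw [T_eq_iff hT a b hr.1 hr.2.1, inD_iff hT hr.1 a b, inD_iff hT (by omega) a b,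
        inD_iff hT hr.1 a b]
      omega
  rw [h1, h2, Nat.card_Ioc]
  have m1 := gT_mono (n := n) (m := m) (T := T) (Nat.le_succ (rx β)) (le_refl (ry β))
  have m2 := gT_mono (n := n) (m := m) (T := T) (le_refl (rx β)) (Nat.le_succ (ry β))
  simp only [Nat.succ_eq_add_one] at m1 m2
  omega

end tab

lemma T_ext {n : ℕ} {m : ℕ → ℕ} {T T' : ℕ → ℕ → ℕ} (hT : IsSyST n m T) (hT' : IsSyST n m T')
    (h : ∀ i y, 1 ≤ i → i < y → gT n m T i y = gT n m T' i y)
    {i j : ℕ} (hj : 1 ≤ j) (hjL : j ≤ lamPart n m 1) (hi : 1 ≤ i) (hik : i ≤ colLen n m j)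
    (hne : T i j ≠ i) : T' i j = T i j := by
  have hlt : i < T i j := by have := T_ge hT hj hjL hi hik; omega
  have h1 := (T_eq_iff hT hj hjL hi hlt).1 ⟨hik, rfl⟩
  refine ((T_eq_iff hT' hj hjL hi hlt).2 ?_).2
  have hkk := nonfix hT hj hjL hi hik hne
  rw [inD_iff hT hi hj hjL, inD_iff hT (by omega) hj hjL, inD_iff hT hi hj hjL] at h1
  rw [inD_iff hT' hi hj hjL, inD_iff hT' (by omega) hj hjL, inD_iff hT' hi hj hjL]
  rw [← h _ _ hi hlt, ← h _ _ hi (by omega)]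
  refine ⟨h1.1, ?_, h1.2.2⟩
  rcases Nat.lt_or_ge (i+1) (T i j) with h5 | h5
  · rw [← h _ _ (by omega) h5]; exact h1.2.1
  · have e : T i j = i + 1 := by omega
    have h6 := h1.2.1
    rw [e, gT_diag hT (by omega)] at h6
    rw [e, gT_diag hT' (by omega)]
    exact h6

lemma rho_inj {n : ℕ} {m : ℕ → ℕ} {T T' : ℕ → ℕ → ℕ} (hT : IsSyST n m T) (hT' : IsSyST n m T')
    (he : rhoMap n m T = rhoMap n m T') : T = T' := by
  have hg : ∀ k i y, 2*n+2 - (i+y) ≤ k → 1 ≤ i → i ≤ y → gT n m T i y = gT n m T' i y := by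
    intro k
    induction k with
    | zero =>
      intro i y h hi _
      rw [gT_out hT hi (by omega), gT_out hT' hi (by omega)]
    | succ k ih =>
      intro i y h hi hiy
      rcases hiy.eq_or_lt with rfl | hlt
      · rw [gT_diag hT hi, gT_diag hT' hi]
      by_cases ho : 2*n+1 < i + y
      · rw [gT_out hT hi (by omega), gT_out hT' hi (by omega)]
      have h1 := rho_eq hT (mkR n i y ⟨hi, hlt, by omega⟩)
      have h2 := rho_eq hT' (mkR n i y ⟨hi, hlt, by omega⟩)
      rw [rx_mkR, ry_mkR] at h1 h2
      rw [← h1, ← h2, he, ih (i+1) y (by omega) (by omega) (by omega),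
        ih i (y+1) (by omega) hi (by omega)]
  have hg' : ∀ i y, 1 ≤ i → i < y → gT n m T i y = gT n m T' i y :=
    fun i y a b => hg _ i y le_rfl a b.le
  funext i j
  by_cases hc : 1 ≤ j ∧ j ≤ lamPart n m 1 ∧ 1 ≤ i ∧ i ≤ colLen n m j
  · obtain ⟨hj, hjL, hi, hik⟩ := hc
    by_cases h1 : T i j = i
    · by_cases h2 : T' i j = i
      · omega
      · exact T_ext hT' hT (fun a b c d => (hg' a b c d).symm) hj hjL hi hik h2
    · exact (T_ext hT hT' hg' hj hjL hi hik h1).symm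
  · rw [hT.1 i j hc, hT'.1 i j hc]

lemma path_le {n : ℕ} (g : ℕ → ℕ → ℕ) (s : SpRoot n → ℕ)
    (hg : ∀ β, s β + max (g (rx β + 1) (ry β)) (g (rx β) (ry β + 1)) ≤ g (rx β) (ry β)) :
    ∀ L : List (SpRoot n), L.IsChain (fun a b => SpDyckStep n a.val b.val) →
      ∀ hd lst : SpRoot n, L.head? = some hd → L.getLast? = some lst →
        (L.map s).sum + max (g (rx lst + 1) (ry lst)) (g (rx lst) (ry lst + 1))
          ≤ g (rx hd) (ry hd) := by
  intro L
  induction L with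
  | nil => intro _ hd lst h; simp at h
  | cons a L ih =>
    intro hch hd lst h1 h2
    have hda : a = hd := by simpa using h1
    subst hda
    cases L with
    | nil =>
      have : a = lst := by simpa using h2
      subst this
      simpa using hg a
    | cons b L =>
      rw [List.isChain_cons_cons] at hch
      have h3 := ih hch.2 b lst (by simp) (by simpa using h2)
      have h4 := hg a
      have h5 := (step_iff a b).1 hch.1
      rw [List.map_cons, List.sum_cons]
      rcases h5 with ⟨e1, e2⟩ | ⟨e1, e2⟩ <;> rw [e1, e2] at h3 <;> omega

lemma slat_iff {n : ℕ} {m : ℕ → ℕ} {s : SpRoot n → ℕ} : s ∈ Slat n m ↔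
    ∀ L : List (SpRoot n), IsDyckPath n L →
      ∀ hd lst : SpRoot n, L.head? = some hd → L.getLast? = some lst →
        ∀ i : ℕ, hd.val = (i, i, false) →
          (∀ j : ℕ, lst.val = (j, j, false) →
            (L.map s).sum ≤ ∑ t ∈ Finset.Icc i j, m t) ∧
          (∀ j : ℕ, lst.val = (j, j, true) →
            (L.map s).sum ≤ lamPart n m i) := by
  have hc : ∀ L : List (SpRoot n), (L.map (fun β => (s β : ℝ))).sum = (((L.map s).sum : ℕ) : ℝ) := by
    intro L
    induction L with
    | nil => simp
    | cons a L ih => simp [ih]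
  unfold Slat FFLVpoly lamPart
  simp only [Set.mem_ofPred_eq, hc]
  simp only [← Nat.cast_sum, Nat.cast_le]
  simp

lemma rho_maps {n : ℕ} {m : ℕ → ℕ} {T : ℕ → ℕ → ℕ} (hT : IsSyST n m T) :
    rhoMap n m T ∈ Slat n m := by
  rw [slat_iff]
  intro L hL hd lst h1 h2 i hi
  have hp := path_le (gT n m T) (rhoMap n m T) (fun β => (rho_eq hT β).le) L hL.2.2.2 hd lst h1 h2
  have hx : rx hd = i := by simp [rx, hi]
  have hy : ry hd = i + 1 := by simp [ry, hi]
  have hr := r_prop hd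
  rw [hx, hy] at hp
  have hm := gT_mono (n := n) (m := m) (T := T) (le_refl i) (Nat.le_succ i)
  rw [gT_diag hT (by omega)] at hm
  simp only [Nat.succ_eq_add_one] at hm
  constructor
  · intro j hj
    have hx' : rx lst = j := by simp [rx, hj]
    have hy' : ry lst = j + 1 := by simp [ry, hj]
    have hr' := r_prop lst
    rw [hx', hy', gT_diag hT (by omega)] at hp
    by_cases hij : i ≤ j
    · have := lam_split (n := n) m hij (by omega)
      omega
    · have := lam_anti (n := n) m (i := j+1) (k := i) (by omega)
      omega
  · intro j hj
    omega

/-- The order-reversing function attached to a lattice point. -/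
def gS (n : ℕ) (m : ℕ → ℕ) (s : SpRoot n → ℕ) (p q : ℕ) : ℕ :=
  if h : 1 ≤ p ∧ p < q ∧ p + q ≤ 2*n+1 then
    s (mkR n p q h) + max (gS n m s (p+1) q) (gS n m s p (q+1))
  else if p = q then lamPart n m p else 0
termination_by 2*n+2-(p+q)
decreasing_by all_goals omega

section sur
variable {n : ℕ} {m : ℕ → ℕ} {s : SpRoot n → ℕ}

lemma gS_diag (p : ℕ) : gS n m s p p = lamPart n m p := by
  rw [gS, dif_neg (by omega), if_pos rfl]

lemma gS_out {p q : ℕ} (h : 2*n+1 < p + q) : gS n m s p q = 0 := by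
  rw [gS, dif_neg (by omega)]
  split_ifs with h1
  · exact lam_zero m (by omega)
  · rfl

lemma gS_rec {p q : ℕ} (h : 1 ≤ p ∧ p < q ∧ p + q ≤ 2*n+1) :
    gS n m s p q = s (mkR n p q h) + max (gS n m s (p+1) q) (gS n m s p (q+1)) := by
  rw [gS, dif_pos h]

/-- A path from `(p,q)` realising `gS`. -/
def HasPath (n : ℕ) (m : ℕ → ℕ) (s : SpRoot n → ℕ) (p q : ℕ) : Prop :=
  ∃ (hd lst : SpRoot n) (L : List (SpRoot n)), rx hd = p ∧ ry hd = q ∧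
    L.head? = some hd ∧ L.getLast? = some lst ∧
    L.IsChain (fun a b => SpDyckStep n a.val b.val) ∧
    ((∃ j, p ≤ j ∧ j ≤ n ∧ lst.val = (j, j, false) ∧
        (L.map s).sum + lamPart n m (j+1) = gS n m s p q) ∨
     (∃ j, 1 ≤ j ∧ j + 1 ≤ n ∧ lst.val = (j, j, true) ∧ (L.map s).sum = gS n m s p q))

lemma HasPath.cons {p q p' q' : ℕ} (h : 1 ≤ p ∧ p < q ∧ p + q ≤ 2*n+1)
    (hs : (p' = p ∧ q' = q + 1) ∨ (p' = p + 1 ∧ q' = q))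
    (hv : gS n m s p q = s (mkR n p q h) + gS n m s p' q') (hp : HasPath n m s p' q') :
    HasPath n m s p q := by
  obtain ⟨hd, lst, L, e1, e2, h1, h2, h3, h4⟩ := hp
  cases L with
  | nil => simp at h1
  | cons b L =>
    have : b = hd := by simpa using h1
    subst this
    refine ⟨mkR n p q h, lst, mkR n p q h :: b :: L, rx_mkR .., ry_mkR .., by simp,
      by simpa using h2, ?_, ?_⟩
    · rw [List.isChain_cons_cons]
      refine ⟨(step_iff _ _).2 ?_, h3⟩
      rw [rx_mkR, ry_mkR]
      clear h4 h1 h2 h3 hv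
      omega
    · rw [List.map_cons, List.sum_cons]
      rcases h4 with ⟨j, a, b, c, d⟩ | ⟨j, a, b, c, d⟩
      · exact Or.inl ⟨j, by omega, b, c, by omega⟩
      · exact Or.inr ⟨j, a, b, c, by omega⟩

lemma hasPath : ∀ k p q : ℕ, 2*n+1 - (p+q) ≤ k → (1 ≤ p ∧ p < q ∧ p + q ≤ 2*n+1) →
    HasPath n m s p q := by
  intro k
  have single : ∀ p q (h : 1 ≤ p ∧ p < q ∧ p + q ≤ 2*n+1), q = p + 1 →
      gS n m s p q = s (mkR n p q h) + gS n m s (p+1) q → HasPath n m s p q := by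
    intro p q h e hv
    subst e
    refine ⟨mkR n p (p+1) h, mkR n p (p+1) h, [mkR n p (p+1) h], rx_mkR .., ry_mkR .., rfl, rfl,
      by simp, Or.inl ⟨p, le_rfl, by omega, ?_, ?_⟩⟩
    · unfold mkR; dsimp only; rw [if_pos (by omega)]; simp
    · rw [hv, gS_diag]; simp
  have last : ∀ p q (h : 1 ≤ p ∧ p < q ∧ p + q ≤ 2*n+1), p + q = 2*n+1 → HasPath n m s p q := by
    intro p q h e
    have hv := gS_rec (m := m) (s := s) h
    rw [gS_out (p := p+1) (by omega), gS_out (q := q+1) (by omega)] at hv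
    by_cases hq : q = p + 1
    · exact single p q h hq (by rw [hv, gS_out (p := p+1) (by omega)]; simp)
    · refine ⟨mkR n p q h, mkR n p q h, [mkR n p q h], rx_mkR .., ry_mkR .., rfl, rfl,
        by simp, Or.inr ⟨p, h.1, by omega, ?_, ?_⟩⟩
      · unfold mkR; dsimp only; rw [if_neg (by omega)]; simp; omega
      · rw [hv]; simp
  induction k with
  | zero => intro p q hk h; exact last p q h (by omega)
  | succ k ih =>
    intro p q hk h
    by_cases e : p + q = 2*n+1
    · exact last p q h e
    have hv := gS_rec (m := m) (s := s) h
    rcases le_total (gS n m s (p+1) q) (gS n m s p (q+1)) with hle | hle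
    · rw [max_eq_right hle] at hv
      exact HasPath.cons h (Or.inl ⟨rfl, rfl⟩) hv (ih p (q+1) (by omega) (by omega))
    · rw [max_eq_left hle] at hv
      by_cases hq : q = p + 1
      · exact single p q h hq hv
      · exact HasPath.cons h (Or.inr ⟨rfl, rfl⟩) hv (ih (p+1) q (by omega) (by omega))

lemma gS_top (hs : s ∈ Slat n m) {p : ℕ} (hp : 1 ≤ p) : gS n m s p (p+1) ≤ lamPart n m p := by
  by_cases ho : 2*n+1 < p + (p+1)
  · rw [gS_out ho]; omega
  obtain ⟨hd, lst, L, e1, e2, h1, h2, h3, h4⟩ :=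
    hasPath (m := m) (s := s) _ p (p+1) le_rfl ⟨hp, by omega, by omega⟩
  have hhd : hd.val = (p, p, false) := by
    have : hd = mkR n p (p+1) ⟨hp, by omega, by omega⟩ :=
      r_ext _ _ (by rw [rx_mkR, e1]) (by rw [ry_mkR, e2])
    rw [this]; unfold mkR; dsimp only; rw [if_pos (by omega)]; simp
  have hD : IsDyckPath n L := by
    refine ⟨?_, ?_, ?_, h3⟩
    · rintro rfl; simp at h1
    · intro h hh
      rw [h1] at hh
      have : hd = h := by simpa using hh
      subst this
      exact ⟨p, hp, by omega, hhd⟩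
    · intro l hl
      rw [h2] at hl
      have : lst = l := by simpa using hl
      subst this
      rcases h4 with ⟨j, a, b, c, d⟩ | ⟨j, a, b, c, d⟩
      · exact Or.inl ⟨j, by omega, b, c⟩
      · exact Or.inr ⟨j, a, b, c⟩
  have hb := slat_iff.1 hs L hD hd lst h1 h2 p hhd
  rcases h4 with ⟨j, a, b, c, d⟩ | ⟨j, a, b, c, d⟩
  · have h5 := hb.1 j c
    have := lam_split (n := n) m a b
    omega
  · have := hb.2 j c
    omega

lemma gS_right (hs : s ∈ Slat n m) {p q : ℕ} (hp : 1 ≤ p) (h : p ≤ q) :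
    gS n m s p (q+1) ≤ gS n m s p q := by
  rcases h.eq_or_lt with rfl | h
  · rw [gS_diag]; exact gS_top hs hp
  by_cases ho : 2*n+1 < p + q
  · rw [gS_out (q := q+1) (by omega)]; omega
  · rw [gS_rec (p := p) (q := q) ⟨hp, h, by omega⟩]
    omega

lemma gS_down {p q : ℕ} (hp : 1 ≤ p) (h : p < q) :
    gS n m s (p+1) q ≤ gS n m s p q := by
  by_cases ho : 2*n+1 < p + q
  · rw [gS_out (p := p+1) (by omega)]; omega
  · rw [gS_rec (p := p) (q := q) ⟨hp, h, by omega⟩]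
    omega

lemma gS_mono (hs : s ∈ Slat n m) {p q p' q' : ℕ} (hp : 1 ≤ p) (hpp : p ≤ p') (hpq : p ≤ q)
    (hpq' : p' ≤ q') (hqq : q ≤ q') : gS n m s p' q' ≤ gS n m s p q := by
  have h1 : gS n m s p' q' ≤ gS n m s p q' := by
    induction p', hpp using Nat.le_induction with
    | base => exact le_rfl
    | succ p' hle ih =>
      exact (gS_down (by omega) (by omega)).trans (ih (by omega))
  refine h1.trans ?_
  clear h1
  induction q', hqq using Nat.le_induction with
  | base => exact le_rfl
  | succ q' hle ih =>
    by_cases hc : p' ≤ q'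
    · exact (gS_right hs hp (by omega)).trans (ih hc)
    · refine (gS_right hs hp (by omega)).trans ?_
      clear ih hpq' hc
      induction q', hle using Nat.le_induction with
      | base => exact le_rfl
      | succ q' hle ih => exact (gS_right hs hp (by omega)).trans ih

lemma gS_le (hs : s ∈ Slat n m) {p q : ℕ} (hp : 1 ≤ p) (hpq : p ≤ q) :
    gS n m s p q ≤ lamPart n m p := by
  have := gS_mono hs hp le_rfl le_rfl hpq hpq
  rwa [gS_diag] at this

/-- `(p,q)` is a maximal element of the `j`-th ideal. -/
def MaxEl (n : ℕ) (m : ℕ → ℕ) (s : SpRoot n → ℕ) (j p q : ℕ) : Prop :=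
  p < q ∧ j ≤ gS n m s p q ∧ gS n m s (p+1) q < j ∧ gS n m s p (q+1) < j

open Classical in
/-- The tableau attached to a lattice point. -/
noncomputable def TS (n : ℕ) (m : ℕ → ℕ) (s : SpRoot n → ℕ) (i j : ℕ) : ℕ :=
  if 1 ≤ j ∧ j ≤ lamPart n m 1 ∧ 1 ≤ i ∧ i ≤ colLen n m j then
    if h : ∃ q, MaxEl n m s j i q then h.choose else i
  else 0

lemma TS_max (hs : s ∈ Slat n m) {i j q : ℕ} (hj : 1 ≤ j) (hjL : j ≤ lamPart n m 1) (hi : 1 ≤ i)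
    (hik : i ≤ colLen n m j) (h : MaxEl n m s j i q) : TS n m s i j = q := by
  unfold TS
  have hex : ∃ q, MaxEl n m s j i q := ⟨q, h⟩
  rw [if_pos ⟨hj, hjL, hi, hik⟩, dif_pos hex]
  have h2 := hex.choose_spec
  generalize hex.choose = q' at h2
  obtain ⟨a, b, c, d⟩ := h
  obtain ⟨a', b', c', d'⟩ := h2
  rcases lt_trichotomy q q' with hl | hl | hl
  · have := gS_mono hs (p := i) (q := q+1) (p' := i) (q' := q') hi le_rfl (by omega) (by omega) hl
    omega
  · exact hl.symm
  · have := gS_mono hs (p := i) (q := q'+1) (p' := i) (q' := q) hi le_rfl (by omega) (by omega) hl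
    omega

lemma TS_cases {i j : ℕ} (hj : 1 ≤ j) (hjL : j ≤ lamPart n m 1) (hi : 1 ≤ i)
    (hik : i ≤ colLen n m j) : TS n m s i j = i ∨ MaxEl n m s j i (TS n m s i j) := by
  unfold TS
  rw [if_pos ⟨hj, hjL, hi, hik⟩]
  split_ifs with hex
  · exact Or.inr hex.choose_spec
  · exact Or.inl rfl

lemma TS_prop {i j : ℕ} (hj : 1 ≤ j) (hjL : j ≤ lamPart n m 1) (hi : 1 ≤ i)
    (hik : i ≤ colLen n m j) : i ≤ TS n m s i j ∧ j ≤ gS n m s i (TS n m s i j) := by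
  rcases TS_cases (s := s) hj hjL hi hik with h | h
  · rw [h, gS_diag]
    exact ⟨le_rfl, (le_colLen m hi hj).1 hik⟩
  · exact ⟨h.1.le, h.2.1⟩

lemma inD_TS (hs : s ∈ Slat n m) {i y j : ℕ} (hj : 1 ≤ j) (hjL : j ≤ lamPart n m 1) (hi : 1 ≤ i)
    (hiy : i ≤ y) : inD n m (TS n m s) j i y ↔ j ≤ gS n m s i y := by
  constructor
  · rintro ⟨i', a, b, c⟩
    have h := TS_prop (s := s) hj hjL (by omega : 1 ≤ i') b
    exact h.2.trans (gS_mono hs hi a hiy h.1 c)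
  · have : ∀ k i y, 2*n+2 - (i+y) ≤ k → 1 ≤ i → i ≤ y → j ≤ gS n m s i y →
        inD n m (TS n m s) j i y := by
      intro k
      induction k with
      | zero =>
        intro i y hk hi hiy h
        rw [gS_out (by omega)] at h; omega
      | succ k ih =>
        intro i y hk hi hiy h
        have hik : i ≤ colLen n m j := (le_colLen m hi hj).2 (h.trans (gS_le hs hi hiy))
        rcases hiy.eq_or_lt with rfl | hlt
        · exact ⟨i, le_rfl, hik, (TS_prop hj hjL hi hik).1⟩
        by_cases ho : 2*n+1 < i + y
        · rw [gS_out ho] at h; omega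
        by_cases h1 : j ≤ gS n m s (i+1) y
        · exact inD_mono (Nat.le_succ i) le_rfl (ih (i+1) y (by omega) (by omega) (by omega) h1)
        by_cases h2 : j ≤ gS n m s i (y+1)
        · exact inD_mono le_rfl (Nat.le_succ y) (ih i (y+1) (by omega) hi (by omega) h2)
        · exact ⟨i, le_rfl, hik,
            (TS_max hs hj hjL hi hik ⟨hlt, h, by omega, by omega⟩).ge⟩
    exact this _ i y le_rfl hi hiy

lemma TS_region {i j : ℕ} (hj : 1 ≤ j) (hjL : j ≤ lamPart n m 1) (hi : 1 ≤ i)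
    (hik : i ≤ colLen n m j) : i + TS n m s i j ≤ 2*n+1 := by
  have h := TS_prop (s := s) hj hjL hi hik
  by_contra hc
  rw [gS_out (p := i) (by omega)] at h
  omega

lemma TS_isSyST (hs : s ∈ Slat n m) : IsSyST n m (TS n m s) := by
  have hfix : ∀ i j : ℕ, 1 ≤ j → j ≤ lamPart n m 1 → 1 ≤ i → i ≤ colLen n m j →
      TS n m s i j ≤ colLen n m j → TS n m s i j = i := by
    intro i j hj hjL hi hik hle
    rcases TS_cases (s := s) hj hjL hi hik with h | h
    · exact h
    · exfalso
      obtain ⟨a, b, c, d⟩ := h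
      have h1 := (le_colLen m (by omega : 1 ≤ TS n m s i j) hj).1 hle
      have h2 := gS_mono hs (p := i+1) (q := TS n m s i j) (p' := TS n m s i j)
        (q' := TS n m s i j) (by omega) (by omega) (by omega) le_rfl le_rfl
      rw [gS_diag] at h2
      omega
  refine ⟨?_, ?_, hfix, ?_, ?_, ?_⟩
  · intro i j h
    unfold TS
    rw [if_neg h]
  · intro i j hj hjL hi hik
    have h1 := TS_prop (s := s) hj hjL hi hik
    have h2 := TS_region (s := s) hj hjL hi hik
    omega
  · intro i₁ i₂ j hj hjL hi hlt hik hne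
    have hm := (TS_cases (s := s) hj hjL hi (by omega)).resolve_left hne
    have hk : colLen n m j < TS n m s i₁ j := by
      by_contra hc
      exact hne (hfix i₁ j hj hjL hi (by omega) (by omega))
    have h2 := TS_prop (s := s) hj hjL (by omega : 1 ≤ i₂) hik
    by_contra hc
    have h3 := gS_mono hs (p := i₁+1) (q := TS n m s i₁ j) (p' := i₂)
        (q' := TS n m s i₂ j) (by omega) (by omega) (by omega) (by omega) (by omega)
    have := hm.2.2.1
    omega
  · intro i i' j hj hjL hi hik hi' hik' e e'
    have h2 := TS_region (s := s) hj hjL hi' hik'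
    have hkn := colLen_le (n := n) m j
    by_contra hc
    have : i = i' := by omega
    subst this
    omega
  · intro i j hj hjL hi hik
    have h1 := TS_prop (s := s) (by omega) hjL hi hik
    exact (inD_TS hs (j := j-1) (by omega) (by omega) hi h1.1).2 (by omega)

open Classical in
lemma gT_TS (hs : s ∈ Slat n m) {i y : ℕ} (hi : 1 ≤ i) (hiy : i ≤ y) :
    gT n m (TS n m s) i y = gS n m s i y := by
  unfold gT
  have : (Finset.Icc 1 (lamPart n m 1)).filter (fun j => inD n m (TS n m s) j i y)
      = Finset.Icc 1 (gS n m s i y) := by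
    ext j
    have h1 := gS_le hs hi hiy
    have h2 := lam_anti (n := n) m hi
    simp only [Finset.mem_filter, Finset.mem_Icc]
    constructor
    · rintro ⟨⟨a, b⟩, c⟩
      exact ⟨a, (inD_TS hs a b hi hiy).1 c⟩
    · rintro ⟨a, b⟩
      exact ⟨⟨a, by omega⟩, (inD_TS hs a (by omega) hi hiy).2 b⟩
  rw [this]; simp

lemma rho_TS (hs : s ∈ Slat n m) : rhoMap n m (TS n m s) = s := by
  funext β
  have hr := r_prop β
  have h1 := rho_eq (TS_isSyST hs) β
  rw [gT_TS hs hr.1 hr.2.1.le, gT_TS (i := rx β + 1) hs (by omega) hr.2.1, gT_TS hs hr.1 (by omega),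
    gS_rec hr] at h1
  have e : mkR n (rx β) (ry β) hr = β := r_ext _ _ (rx_mkR ..) (ry_mkR ..)
  rw [e] at h1
  omega

end sur

end SpFFLV

/-- For every dominant weight `λ = m₁ω₁ + ⋯ + m_nω_n`, the map `ρ_λ` is a
well-defined bijection from `SyST_λ` onto `S(λ)`. -/
theorem spFFLV_tableau_bijection (n : ℕ) (hn : 2 ≤ n)
    (m : ℕ → ℕ) (hsupp : ∀ ℓ, n < ℓ → m ℓ = 0) :
    Set.BijOn (rhoMap n m) {T | IsSyST n m T} (Slat n m) := by
  refine ⟨fun T hT => SpFFLV.rho_maps hT, fun T hT T' hT' h => SpFFLV.rho_inj hT hT' h, ?_⟩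
  intro s hs
  exact ⟨SpFFLV.TS n m s, SpFFLV.TS_isSyST hs, SpFFLV.rho_TS hs⟩
end

section
/- The linear map w : ℝ^{Φ⁺} → ℝ^{𝒫} defined by w(d)_J := −Σ_{β∈Φ⁺} s_{[|J|],J}(β)·d(β) is injective. -/
/-- `𝒫`: nonempty subsets of `{1,…,2n}` of size at most `n` (indices of Plücker coordinates). -/
def PIdx (n : ℕ) : Type :=
  {J : Finset ℕ // J.Nonempty ∧ J ⊆ Finset.Icc 1 (2*n) ∧ J.card ≤ n}

/-- The weight map `w : ℝ^{Φ⁺} → ℝ^{𝒫}`, `w(d)_J = -Σ_{β ∈ Φ⁺} s_{[|J|],J}(β)·d(β)`. -/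
noncomputable def wMap (n : ℕ) (d : SpRoot n → ℝ) : PIdx n → ℝ :=
  fun J => - ∑ᶠ β : SpRoot n, (sKJ n J.val.card J.val β : ℝ) * d β

theorem sKJ_single (n i y : ℕ) (hi : 1 ≤ i) (hy : i < y) (β : SpRoot n) :
    sKJ n i (insert y (Finset.Icc 1 (i - 1))) β = if rIdxXY n i y = β.val then 1 else 0 := by
  have h1 : Finset.Icc 1 i \ insert y (Finset.Icc 1 (i - 1)) = {i} := by
    ext a
    simp only [Finset.mem_sdiff, Finset.mem_Icc, Finset.mem_insert, Finset.mem_singleton]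
    omega
  have h2 : insert y (Finset.Icc 1 (i - 1)) \ Finset.Icc 1 i = {y} := by
    ext a
    simp only [Finset.mem_sdiff, Finset.mem_Icc, Finset.mem_insert, Finset.mem_singleton]
    omega
  unfold sKJ
  rw [h1, h2]
  simp [List.countP_cons]

theorem exists_xy (n : ℕ) (β : SpRoot n) :
    ∃ i y, 1 ≤ i ∧ i ≤ n ∧ i < y ∧ y ≤ 2 * n ∧ rIdxXY n i y = β.val := by
  obtain ⟨⟨i, j, b⟩, h1, h2, h3, h4⟩ := β
  simp only at h1 h2 h3 h4
  by_cases hb : b = false ∧ j < n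
  · obtain ⟨rfl, hj⟩ := hb
    refine ⟨i, j + 1, h1, by omega, by omega, by omega, ?_⟩
    have : j + 1 ≤ n := hj
    simp [rIdxXY, this]
  · refine ⟨i, 2 * n + 1 - j, h1, by omega, by omega, by omega, ?_⟩
    have e1 : ¬ (2 * n + 1 - j ≤ n) := by omega
    have e2 : i ≤ n := by omega
    have e3 : 2 * n + 1 - j ≤ 2 * n + 1 - i := by omega
    have e4 : 2 * n + 1 - (2 * n + 1 - j) = j := by omega
    simp only [rIdxXY, if_neg e1, if_pos e2, if_pos e3, e4, rIdx]
    cases b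
    · have : j = n := by
        simp at hb
        omega
      simp [this]
    · have : j ≠ n := by
        have := h4 rfl
        omega
      simp [this]

/-- The linear map `w : ℝ^{Φ⁺} → ℝ^{𝒫}`,
`w(d)_J = -Σ_{β ∈ Φ⁺} s_{[|J|],J}(β)·d(β)`, is injective. -/
theorem spFFLV_weight_map_injective (n : ℕ) (hn : 2 ≤ n) :
    Function.Injective (wMap n) := by
  intro d e hde
  funext β
  obtain ⟨i, y, hi, hin, hy, hyn, hr⟩ := exists_xy n β
  have hc : (insert y (Finset.Icc 1 (i - 1))).card = i := by
    rw [Finset.card_insert_of_notMem (by simp only [Finset.mem_Icc]; omega), Nat.card_Icc]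
    omega
  have key : ∀ f : SpRoot n → ℝ,
      ∑ᶠ γ : SpRoot n, (sKJ n i (insert y (Finset.Icc 1 (i - 1))) γ : ℝ) * f γ = f β := by
    intro f
    rw [finsum_eq_single _ β]
    · rw [sKJ_single n i y hi hy, if_pos hr]
      simp
    · intro γ hγ
      rw [sKJ_single n i y hi hy, if_neg]
      · simp
      · intro h
        exact hγ (Subtype.ext (h.symm.trans hr))
  have h := congrFun hde ⟨insert y (Finset.Icc 1 (i - 1)), Finset.insert_nonempty _ _, by
    intro a
    simp only [Finset.mem_Icc, Finset.mem_insert]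
    omega, by omega⟩
  simp only [wMap, hc, key] at h
  exact neg_injective h
end
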